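/- arXiv:1207.4850 — 10 statements merged into one kernel-verified Lean document; each statement's English description precedes it below -/
import Mathlib

section
/- Let α, β, γ be complex numbers and let W : ℝ → M be three times differentiable with W(t) invertible for every real t, satisfying the linear third-order matrix ODE W'''(t) = α·W(t) + β·W'(t) + γ·W''(t) for all t. Define U(t) = W(t)⁻¹·W'(t) and V(t) = W(t)⁻¹·W''(t). Then U and V are differentiable and satisfy the matrix system (EqUV): U'(t) = −U(t)² + V(t) and V'(t) = −U(t)·V(t) + α·I + β·U(t) + γ·V(t) for all t. -/
/-!
The identity `(W⁻¹ X)' = -(W⁻¹ W') (W⁻¹ X) + W⁻¹ X'` holds in any finite-dimensional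
normed algebra (`hasDerivAt_ringInverse_mul`). It applies to matrices because the derivative depends only on the
topology, so the entrywise sup norm may be exchanged for the submultiplicative `ℓ^∞` operator norm
(`hasDerivAt_matrix_inv_mul`). Taking `X = W'` and `X = W''`, and in the second case expanding
`W'''` by the linear equation, gives the two equations of the system.
-/

attribute [local instance] Matrix.normedAddCommGroup Matrix.normedSpace

/-- Derivative of a left quotient in a finite-dimensional normed algebra (finite dimension
supplies completeness). -/
lemma hasDerivAt_ringInverse_mul {R : Type*} [NormedRing R] [NormedAlgebra ℝ R]
    [FiniteDimensional ℝ R] {W X : ℝ → R} {dW dX : R} {t : ℝ}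
    (hW : HasDerivAt W dW t) (hX : HasDerivAt X dX t) (hu : IsUnit (W t)) :
    HasDerivAt (fun s => Ring.inverse (W s) * X s)
      (-((Ring.inverse (W t) * dW) * (Ring.inverse (W t) * X t)) + Ring.inverse (W t) * dX) t := by
  have : CompleteSpace R := FiniteDimensional.complete ℝ R
  obtain ⟨u, hu⟩ := hu
  have h := hasFDerivAt_ringInverse (𝕜 := ℝ) u
  rw [hu] at h
  have h2 := (h.comp_hasDerivAt t hW).mul hX
  refine h2.congr_deriv ?_
  simp [← hu, mul_assoc]

/-- The quotient rule for matrices, with respect to the entrywise sup norm. That norm is not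
submultiplicative, so the normed algebra statement is applied to the `ℓ^∞` operator norm, which
induces the same topology. -/
lemma hasDerivAt_matrix_inv_mul {N : ℕ} {W X : ℝ → Matrix (Fin N) (Fin N) ℂ}
    {dW dX : Matrix (Fin N) (Fin N) ℂ} {t : ℝ}
    (hW : HasDerivAt W dW t) (hX : HasDerivAt X dX t) (hu : IsUnit (W t)) :
    HasDerivAt (fun s => (W s)⁻¹ * X s)
      (-(((W t)⁻¹ * dW) * ((W t)⁻¹ * X t)) + (W t)⁻¹ * dX) t := by
  simp only [Matrix.nonsing_inv_eq_ringInverse]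
  let : NormedRing (Matrix (Fin N) (Fin N) ℂ) := Matrix.linftyOpNormedRing
  let : NormedAlgebra ℝ (Matrix (Fin N) (Fin N) ℂ) := Matrix.linftyOpNormedAlgebra
  exact hasDerivAt_ringInverse_mul hW hX hu

/-- If `W : ℝ → M` is three times differentiable, invertible for every `t`,
and satisfies `W''' = α•W + β•W' + γ•W''`, then `U = W⁻¹·W'` and `V = W⁻¹·W''` are
differentiable and satisfy the matrix system (EqUV):
`U' = −U² + V` and `V' = −U·V + α·I + β·U + γ·V`. -/
theorem goldfish_stmt0 (N : ℕ) (hN : 0 < N) (α β γ : ℂ)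
    (W Wd Wdd Wddd U V : ℝ → Matrix (Fin N) (Fin N) ℂ)
    (hW : ∀ t : ℝ, HasDerivAt W (Wd t) t)
    (hWd : ∀ t : ℝ, HasDerivAt Wd (Wdd t) t)
    (hWdd : ∀ t : ℝ, HasDerivAt Wdd (Wddd t) t)
    (hWinv : ∀ t : ℝ, IsUnit (W t))
    (hODE : ∀ t : ℝ, Wddd t = α • W t + β • Wd t + γ • Wdd t)
    (hU : ∀ t : ℝ, U t = (W t)⁻¹ * Wd t)
    (hV : ∀ t : ℝ, V t = (W t)⁻¹ * Wdd t) :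
    ∀ t : ℝ,
      HasDerivAt U (-(U t * U t) + V t) t ∧
      HasDerivAt V (-(U t * V t) + α • (1 : Matrix (Fin N) (Fin N) ℂ) + β • U t + γ • V t) t := by
  intro t
  have hinv : (W t)⁻¹ * W t = 1 :=
    Matrix.nonsing_inv_mul _ ((Matrix.isUnit_iff_isUnit_det _).1 (hWinv t))
  obtain rfl : U = fun s => (W s)⁻¹ * Wd s := funext hU
  obtain rfl : V = fun s => (W s)⁻¹ * Wdd s := funext hV
  refine ⟨hasDerivAt_matrix_inv_mul (hW t) (hWd t) (hWinv t),
    (hasDerivAt_matrix_inv_mul (hW t) (hWdd t) (hWinv t)).congr_deriv ?_⟩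
  simp only [hODE t, mul_add, Matrix.mul_smul, hinv, add_assoc]
end

section
/- Let α, β, γ be complex numbers and let U, V : ℝ → M be differentiable functions satisfying the matrix system (EqUV). Let W : ℝ → M be differentiable and satisfy W'(t) = W(t)·U(t) for all t. Then W is three times differentiable, W''(t) = W(t)·V(t), and W satisfies the linear third-order matrix ODE W'''(t) = α·W(t) + β·W'(t) + γ·W''(t) for all t. -/
attribute [local instance] Matrix.normedAddCommGroup Matrix.normedSpace

/-- Product rule for matrix-valued functions, obtained entrywise because the elementwise sup norm
on matrices is not submultiplicative, so the product rule for normed algebras does not apply. -/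
lemma hasDerivAt_matrix_mul {N : ℕ} {A B : ℝ → Matrix (Fin N) (Fin N) ℂ}
    {A' B' : Matrix (Fin N) (Fin N) ℂ} {t : ℝ}
    (hA : HasDerivAt A A' t) (hB : HasDerivAt B B' t) :
    HasDerivAt (fun s => A s * B s) (A' * B t + A t * B') t := by
  have entry {C : ℝ → Matrix (Fin N) (Fin N) ℂ} {C' : Matrix (Fin N) (Fin N) ℂ}
      (hC : HasDerivAt C C' t) (i j : Fin N) : HasDerivAt (fun s => C s i j) (C' i j) t :=
    hasDerivAt_pi.1 (hasDerivAt_pi.1 hC i) j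
  refine hasDerivAt_pi.2 fun i => hasDerivAt_pi.2 fun j => ?_
  simp only [Matrix.mul_apply, Matrix.add_apply, ← Finset.sum_add_distrib]
  exact HasDerivAt.fun_sum fun k _ => (entry hA i k).mul (entry hB k j)

/-- If `U, V : ℝ → M` are differentiable and satisfy the matrix system (EqUV),
and `W : ℝ → M` is differentiable with `W' = W·U`, then `W` is three times differentiable,
`W'' = W·V`, and `W''' = α•W + β•W' + γ•W''`. -/
theorem goldfish_stmt1 (N : ℕ) (hN : 0 < N) (α β γ : ℂ)
    (U V W : ℝ → Matrix (Fin N) (Fin N) ℂ)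
    (hU : ∀ t : ℝ, HasDerivAt U (-(U t * U t) + V t) t)
    (hV : ∀ t : ℝ, HasDerivAt V
      (-(U t * V t) + α • (1 : Matrix (Fin N) (Fin N) ℂ) + β • U t + γ • V t) t)
    (hW : ∀ t : ℝ, HasDerivAt W (W t * U t) t) :
    ∀ t : ℝ,
      HasDerivAt (fun s => W s * U s) (W t * V t) t ∧
      HasDerivAt (fun s => W s * V s)
        (α • W t + β • (W t * U t) + γ • (W t * V t)) t := by
  -- In both products the term `W' * _ = W * U * _` cancels the quadratic term of (EqUV).
  intro t
  constructor
  · convert hasDerivAt_matrix_mul (hW t) (hU t) using 1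
    simp [mul_add, mul_assoc]
  · convert hasDerivAt_matrix_mul (hW t) (hV t) using 1
    simp only [mul_add, mul_neg, mul_assoc, Matrix.mul_smul, mul_one]
    abel
end

section
/- Let ω > 0 be real, k₁, k₂, k₃ integers, and ω₁, ω₂, ω₃ complex numbers with Re(ω_j) = k_j·ω for j = 1,2,3, Im(ω₁) = Im(ω₂), and Im(ω₁) < Im(ω₃); set T = 2π/ω. Let A, B be constant N×N complex matrices such that I + A·exp(iθ) is invertible for every real θ. Define S(t) = I + A·exp(i(ω₂−ω₁)t) + B·exp(i(ω₃−ω₁)t) and U(t) = i·S(t)⁻¹·(ω₁I + ω₂·A·exp(i(ω₂−ω₁)t) + ω₃·B·exp(i(ω₃−ω₁)t)). Then there exists t₀ such that S(t) is invertible for all t ≥ t₀, and ‖U(t+T) − U(t)‖ → 0 as t → +∞: the matrix U is asymptotically periodic with period T. -/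
/-!
Write `z(t) = exp(i(ω₂-ω₁)t)` and `w(t) = exp(i(ω₃-ω₁)t)`. Then `ω₂ - ω₁` is a real integer multiple
of `ω`, so `z` stays on the unit circle and has period `T`, while `w(t) → 0`. Both `S` and `U` are
functions of the pair `(z, w)`, continuous at every point of the compact set
`K = circle × {0}`, where `1 + z • A` is invertible. The invertible pairs form an open
neighbourhood of `K`, which contains `(z(t), w(t))` for large `t`. Continuity at the points of the
compact set `K` is uniform, so `U(t)` differs from the `T`-periodic function obtained by replacing
`w` by `0` by a quantity that tends to `0`; hence `U(t+T) - U(t) → 0`.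
-/

attribute [local instance] Matrix.normedAddCommGroup Matrix.normedSpace

open Filter

/-- The matrix `S` as a function of the two exponentials `p = (z, w)`. -/
noncomputable def goldfishS {N : ℕ} (A B : Matrix (Fin N) (Fin N) ℂ) (p : ℂ × ℂ) :
    Matrix (Fin N) (Fin N) ℂ :=
  1 + p.1 • A + p.2 • B

/-- The matrix `U` as a function of the two exponentials `p = (z, w)`. -/
noncomputable def goldfishU {N : ℕ} (A B : Matrix (Fin N) (Fin N) ℂ) (ω₁ ω₂ ω₃ : ℂ) (p : ℂ × ℂ) :
    Matrix (Fin N) (Fin N) ℂ :=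
  Complex.I • ((goldfishS A B p)⁻¹ *
    (ω₁ • (1 : Matrix (Fin N) (Fin N) ℂ) + (ω₂ * p.1) • A + (ω₃ * p.2) • B))

lemma continuous_goldfishS {N : ℕ} (A B : Matrix (Fin N) (Fin N) ℂ) :
    Continuous (goldfishS A B) := by
  unfold goldfishS
  fun_prop

lemma continuousAt_goldfishU {N : ℕ} (A B : Matrix (Fin N) (Fin N) ℂ) (ω₁ ω₂ ω₃ : ℂ) (p : ℂ × ℂ)
    (hp : (goldfishS A B p).det ≠ 0) : ContinuousAt (goldfishU A B ω₁ ω₂ ω₃) p := by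
  have hS := continuous_goldfishS A B
  have hinv : ContinuousAt (fun q => (goldfishS A B q)⁻¹) p := by
    simp only [Matrix.inv_def, Ring.inverse_eq_inv']
    exact (hS.matrix_det.continuousAt.inv₀ hp).smul hS.matrix_adjugate.continuousAt
  have hR : Continuous (fun q : ℂ × ℂ =>
      ω₁ • (1 : Matrix (Fin N) (Fin N) ℂ) + (ω₂ * q.1) • A + (ω₃ * q.2) • B) := by
    fun_prop
  have hmul : Continuous (fun q : Matrix (Fin N) (Fin N) ℂ × Matrix (Fin N) (Fin N) ℂ =>
      q.1 * q.2) := continuous_fst.matrix_mul continuous_snd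
  exact (ContinuousAt.comp (f := fun q => ((goldfishS A B q)⁻¹, _)) hmul.continuousAt
    (hinv.prodMk hR.continuousAt)).const_smul Complex.I

/-- If `Re(ωⱼ) = kⱼ·ω` (`ω > 0` real, `kⱼ` integers), `Im(ω₁) = Im(ω₂)`,
`Im(ω₁) < Im(ω₃)`, `T = 2π/ω`, and `I + A·e^{iθ}` is invertible for every real `θ`, then
`S(t) = I + A·e^{i(ω₂−ω₁)t} + B·e^{i(ω₃−ω₁)t}` is invertible for all sufficiently large `t`
and `‖U(t+T) − U(t)‖ → 0` as `t → +∞`: `U` is asymptotically periodic with period `T`. -/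
theorem goldfish_stmt6 (N : ℕ) (hN : 0 < N) (ω : ℝ) (hω : 0 < ω)
    (k₁ k₂ k₃ : ℤ) (ω₁ ω₂ ω₃ : ℂ)
    (h1 : ω₁.re = k₁ * ω) (h2 : ω₂.re = k₂ * ω) (h3 : ω₃.re = k₃ * ω)
    (him12 : ω₁.im = ω₂.im) (him13 : ω₁.im < ω₃.im)
    (T : ℝ) (hT : T = 2 * Real.pi / ω)
    (A B : Matrix (Fin N) (Fin N) ℂ)
    (hAinv : ∀ θ : ℝ, IsUnit ((1 : Matrix (Fin N) (Fin N) ℂ)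
      + Complex.exp (Complex.I * (θ : ℂ)) • A))
    (S U : ℝ → Matrix (Fin N) (Fin N) ℂ)
    (hS : ∀ t : ℝ, S t = 1
      + Complex.exp (Complex.I * (ω₂ - ω₁) * (t : ℂ)) • A
      + Complex.exp (Complex.I * (ω₃ - ω₁) * (t : ℂ)) • B)
    (hU : ∀ t : ℝ, U t = Complex.I • ((S t)⁻¹ *
      (ω₁ • (1 : Matrix (Fin N) (Fin N) ℂ)
        + (ω₂ * Complex.exp (Complex.I * (ω₂ - ω₁) * (t : ℂ))) • A
        + (ω₃ * Complex.exp (Complex.I * (ω₃ - ω₁) * (t : ℂ))) • B))) :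
    (∃ t₀ : ℝ, ∀ t ≥ t₀, IsUnit (S t)) ∧
    Tendsto (fun t : ℝ => ‖U (t + T) - U t‖) atTop (nhds 0) := by
  set z : ℝ → ℂ := fun t => Complex.exp (Complex.I * (ω₂ - ω₁) * (t : ℂ)) with hz
  set w : ℝ → ℂ := fun t => Complex.exp (Complex.I * (ω₃ - ω₁) * (t : ℂ)) with hw
  have hdiff : ω₂ - ω₁ = (((k₂ - k₁ : ℤ) : ℂ)) * (ω : ℂ) := by
    apply Complex.ext
    · simp [h1, h2]; ring
    · simp [him12]
  have hznorm : ∀ t, ‖z t‖ = 1 := by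
    intro t
    simp [hz, Complex.norm_exp, him12]
  have hzper : ∀ t, z (t + T) = z t := by
    intro t
    have hω' : (ω : ℂ) ≠ 0 := by exact_mod_cast hω.ne'
    simp only [hz, hdiff, hT]
    rw [Complex.exp_eq_exp_iff_exists_int]
    refine ⟨k₂ - k₁, ?_⟩
    push_cast
    field_simp
  have hw0 : Tendsto w atTop (nhds 0) := by
    rw [tendsto_zero_iff_norm_tendsto_zero]
    have hn : ∀ t, ‖w t‖ = Real.exp (-((ω₃.im - ω₁.im) * t)) := by
      intro t
      simp [hw, Complex.norm_exp]
      ring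
    simp only [hn]
    exact Real.tendsto_exp_neg_atTop_nhds_zero.comp
      (tendsto_id.const_mul_atTop (sub_pos.2 him13))
  have hSeq : ∀ t, S t = goldfishS A B (z t, w t) := fun t => hS t
  have hUeq : ∀ t, U t = goldfishU A B ω₁ ω₂ ω₃ (z t, w t) := by
    intro t
    rw [hU, hSeq]
    rfl
  set K : Set (ℂ × ℂ) := Metric.sphere 0 1 ×ˢ {0} with hK
  have hKc : IsCompact K := (isCompact_sphere _ _).prod isCompact_singleton
  have hKdet : ∀ p ∈ K, (goldfishS A B p).det ≠ 0 := by
    rintro ⟨a, b⟩ ⟨ha, hb⟩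
    have ha' : ‖a‖ = 1 := by simpa using ha
    have hb' : b = 0 := hb
    have h := hAinv a.arg
    have hexp : Complex.exp (Complex.I * (a.arg : ℂ)) = a := by
      have := Complex.norm_mul_exp_arg_mul_I a
      rw [ha'] at this
      simpa [mul_comm] using this
    rw [hexp] at h
    have h' := (Matrix.isUnit_iff_isUnit_det _).1 h
    simpa [goldfishS, hb'] using h'.ne_zero
  have hmem : ∀ t, (z t, (0 : ℂ)) ∈ K := fun t => ⟨by simp [hznorm t], rfl⟩
  have hdist : Tendsto (fun t => dist (z t, w t) (z t, (0 : ℂ))) atTop (nhds 0) := by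
    simpa [Prod.dist_eq] using hw0.norm
  have hunif : Tendsto (fun t => ((z t, (0 : ℂ)), (z t, w t))) atTop (uniformity (ℂ × ℂ)) := by
    rw [tendsto_uniformity_iff_dist_tendsto_zero]
    simpa [dist_comm] using hdist
  constructor
  · have hopen : IsOpen {p | (goldfishS A B p).det ≠ 0} :=
      isOpen_ne_fun (continuous_goldfishS A B).matrix_det continuous_const
    obtain ⟨δ, hδ, hsub⟩ := hKc.exists_thickening_subset_open hopen hKdet
    obtain ⟨t₀, ht₀⟩ := eventually_atTop.1 (hdist.eventually (gt_mem_nhds hδ))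
    refine ⟨t₀, fun t ht => ?_⟩
    rw [hSeq, Matrix.isUnit_iff_isUnit_det, isUnit_iff_ne_zero]
    exact hsub (Metric.mem_thickening_iff.2 ⟨_, hmem t, ht₀ t ht⟩)
    -- `U` is asymptotic to the periodic function obtained by setting `w = 0`.
  · have hlim : Tendsto (fun t => dist (goldfishU A B ω₁ ω₂ ω₃ (z t, 0)) (U t)) atTop
        (nhds 0) := by
      refine tendsto_uniformity_iff_dist_tendsto_zero
        (f := fun t => (goldfishU A B ω₁ ω₂ ω₃ (z t, 0), U t)).1 ?_
      intro r hr
      have h := hKc.uniformContinuousAt_of_continuousAt (goldfishU A B ω₁ ω₂ ω₃)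
        (fun p hp => continuousAt_goldfishU A B ω₁ ω₂ ω₃ p (hKdet p hp)) hr
      rw [mem_map]
      filter_upwards [mem_map.1 (hunif h)] with t ht
      rw [Set.mem_preimage, hUeq]
      exact ht (hmem t)
    have hshift := hlim.comp (tendsto_atTop_add_const_right atTop T tendsto_id)
    refine squeeze_zero (fun _ => norm_nonneg _) (fun t => ?_)
      (by simpa using hshift.add hlim)
    rw [← dist_eq_norm]
    have := dist_triangle_left (U (t + T)) (U t) (goldfishU A B ω₁ ω₂ ω₃ (z t, 0))
    simpa [hzper] using this
end

section
/- Let α, β, γ be complex numbers and let U, V : ℝ → M be differentiable and satisfy the matrix system (EqUV). Let R : ℝ → M be differentiable with R(t) invertible for every t, and define Z(t) = R(t)⁻¹·U(t)·R(t), Y(t) = R(t)⁻¹·V(t)·R(t), and M̂(t) = R(t)⁻¹·R'(t). Then Z and Y are differentiable and satisfy Z'(t) + [M̂(t), Z(t)] = −Z(t)² + Y(t) and Y'(t) + [M̂(t), Y(t)] = −Z(t)·Y(t) + α·I + β·Z(t) + γ·Y(t) for all t, where [A,B] = AB − BA denotes the matrix commutator. -/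
/-!
Conjugation by `R` turns differentiation into differentiation plus a commutator: since
`(R⁻¹)' = -R⁻¹ R' R⁻¹`, the product rule gives
`(R⁻¹ X R)' = -[R⁻¹ R', R⁻¹ X R] + R⁻¹ X' R` for every differentiable `X`
(`hasDerivAt_conj` in a Banach algebra, `hasDerivAt_matrix_conj` for matrices).
The theorem is the case `X = U` and `X = V`: conjugation by `R` is an algebra automorphism, so it
carries the right-hand sides of the system for `U, V` to the same expressions in `Z, Y`.
-/

theorem hasDerivAt_conj {A : Type*} [NormedRing A] [NormedAlgebra ℝ A] [CompleteSpace A]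
    {X R : ℝ → A} {X' R' : A} {t : ℝ} (hX : HasDerivAt X X' t) (hR : HasDerivAt R R' t)
    (hu : IsUnit (R t)) :
    HasDerivAt (fun s => Ring.inverse (R s) * X s * R s)
      (-(Ring.inverse (R t) * R' * (Ring.inverse (R t) * X t * R t)
          - Ring.inverse (R t) * X t * R t * (Ring.inverse (R t) * R'))
        + Ring.inverse (R t) * X' * R t) t := by
  obtain ⟨u, hu⟩ := hu
  have hI : HasDerivAt (fun s => Ring.inverse (R s))
      (-(Ring.inverse (R t) * R' * Ring.inverse (R t))) t := by
    have h := hasFDerivAt_ringInverse (𝕜 := ℝ) u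
    rw [hu] at h
    have h2 := h.comp_hasDerivAt t hR
    simpa [← hu, Function.comp_def] using h2
  refine ((hI.mul hX).mul hR).congr_deriv ?_
  have h1 : R t * (Ring.inverse (R t) * R') = R' := by
    rw [← mul_assoc, Ring.mul_inverse_cancel _ ⟨u, hu⟩, one_mul]
  rw [mul_assoc (_ * X t) (R t), h1]
  simp only [Pi.mul_apply]
  noncomm_ring

/-- `HasDerivAt` for matrix-valued functions refers only to the entrywise topology, which is the
one induced by the submultiplicative `ℓ^∞` operator norm; `hasDerivAt_conj` is applied with that
norm. -/
theorem hasDerivAt_matrix_conj {N : ℕ} {X R : ℝ → Matrix (Fin N) (Fin N) ℂ}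
    {X' R' : Matrix (Fin N) (Fin N) ℂ} {t : ℝ} (hX : HasDerivAt X X' t)
    (hR : HasDerivAt R R' t) (hu : IsUnit (R t)) :
    HasDerivAt (fun s => (R s)⁻¹ * X s * R s)
      (-((R t)⁻¹ * R' * ((R t)⁻¹ * X t * R t) - (R t)⁻¹ * X t * R t * ((R t)⁻¹ * R'))
        + (R t)⁻¹ * X' * R t) t := by
  simp only [Matrix.nonsing_inv_eq_ringInverse]
  exact @hasDerivAt_conj (Matrix (Fin N) (Fin N) ℂ) Matrix.linftyOpNormedRing
    Matrix.linftyOpNormedAlgebra (inferInstanceAs (CompleteSpace (Fin N → Fin N → ℂ)))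
    X R X' R' t hX hR hu

/-- If `U, V` satisfy the matrix system (EqUV) and `R` is differentiable and
everywhere invertible, then `Z = R⁻¹UR`, `Y = R⁻¹VR` are differentiable and satisfy
`Z' + [M̂,Z] = −Z² + Y` and `Y' + [M̂,Y] = −Z·Y + α·I + β·Z + γ·Y`, where `M̂ = R⁻¹R'`
and `[A,B] = AB − BA`. -/
theorem goldfish_stmt8 (N : ℕ) (hN : 0 < N) (α β γ : ℂ)
    (U V R Rd : ℝ → Matrix (Fin N) (Fin N) ℂ)
    (hU : ∀ t : ℝ, HasDerivAt U (-(U t * U t) + V t) t)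
    (hV : ∀ t : ℝ, HasDerivAt V
      (-(U t * V t) + α • (1 : Matrix (Fin N) (Fin N) ℂ) + β • U t + γ • V t) t)
    (hR : ∀ t : ℝ, HasDerivAt R (Rd t) t)
    (hRu : ∀ t : ℝ, IsUnit (R t))
    (Z Y Mh : ℝ → Matrix (Fin N) (Fin N) ℂ)
    (hZ : ∀ t : ℝ, Z t = (R t)⁻¹ * U t * R t)
    (hY : ∀ t : ℝ, Y t = (R t)⁻¹ * V t * R t)
    (hM : ∀ t : ℝ, Mh t = (R t)⁻¹ * Rd t) :
    ∀ t : ℝ,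
      HasDerivAt Z (-(Mh t * Z t - Z t * Mh t) + (-(Z t * Z t) + Y t)) t ∧
      HasDerivAt Y (-(Mh t * Y t - Y t * Mh t) +
        (-(Z t * Y t) + α • (1 : Matrix (Fin N) (Fin N) ℂ) + β • Z t + γ • Y t)) t := by
  intro t
  have hdet : IsUnit (R t).det := (Matrix.isUnit_iff_isUnit_det _).mp (hRu t)
  have hmul : ∀ A B : Matrix (Fin N) (Fin N) ℂ,
      (R t)⁻¹ * A * R t * ((R t)⁻¹ * B * R t) = (R t)⁻¹ * (A * B) * R t := by
    intro A B
    simp only [Matrix.mul_assoc, Matrix.mul_nonsing_inv_cancel_left _ _ hdet]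
  rw [funext hZ, funext hY]
  constructor
  · have h := hasDerivAt_matrix_conj (hU t) (hR t) (hRu t)
    simpa only [hM, hmul, mul_add, add_mul, mul_neg, neg_mul] using h
  · have h := hasDerivAt_matrix_conj (hV t) (hR t) (hRu t)
    simpa only [hM, hmul, mul_add, add_mul, mul_neg, neg_mul, Matrix.mul_smul, Matrix.smul_mul,
      mul_one, Matrix.nonsing_inv_mul _ hdet] using h
end

section
/- Let α, β, γ be complex numbers and let U, V : ℝ → M be differentiable and satisfy the matrix system (EqUV). Let R : ℝ → M be differentiable with R(t) invertible for every t, and suppose Z(t) = R(t)⁻¹·U(t)·R(t) is diagonal, Z(t) = diag(z₁(t),…,z_N(t)), with the z_n(t) pairwise distinct for every t and each z_n differentiable. Let Y(t) = R(t)⁻¹·V(t)·R(t) with entries Y_{nm}(t), and M̂(t) = R(t)⁻¹·R'(t) with entries M̂_{nm}(t). Then for every t: (a) the diagonal entries of Y satisfy Y_{nn}(t) = z_n'(t) + z_n(t)²; (b) the off-diagonal entries of M̂ satisfy M̂_{nm}(t) = −Y_{nm}(t)/(z_n(t) − z_m(t)) for n ≠ m; and (c) each z_n is twice differentiable and satisfies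 the Newtonian-like equation z_n'' = −3·z_n'·z_n + γ·z_n' − z_n³ + γ·z_n² + β·z_n + α + 2·Σ_{ℓ≠n} Y_{nℓ}·Y_{ℓn}/(z_n − z_ℓ). -/
/-!
Conjugation by `R` turns time derivatives into covariant ones: if `W' = W₁` then
`(R⁻¹WR)' = R⁻¹W₁R + [R⁻¹WR, M̂]` with `M̂ = R⁻¹R'` (`hasDerivAt_conj_entry`).
Applied to `U` this gives `Z' = -Z² + Y + [Z, M̂]`. As `Z` is diagonal, the diagonal entries of
this identity are (a) and the off-diagonal ones are (b). Applied to `V` it gives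
`Y' = -ZY + α + βZ + γY + [Y, M̂]`; since `zₙ' = Yₙₙ - zₙ²` by (a), its diagonal entries, with
`M̂` off the diagonal replaced through (b), give (c).

Derivatives of matrix-valued curves are handled entrywise, which makes the statements of the
auxiliary lemmas independent of the norm put on matrices.
-/

/-- Entrywise form of `(R⁻¹)' = -R⁻¹ R' R⁻¹`. -/
theorem hasDerivAt_inv_entry {N : ℕ} {R : ℝ → Matrix (Fin N) (Fin N) ℂ}
    {Rd : Matrix (Fin N) (Fin N) ℂ} {t : ℝ} (hRu : IsUnit (R t))
    (hR : ∀ i j, HasDerivAt (fun s => R s i j) (Rd i j) t) (i j : Fin N) :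
    HasDerivAt (fun s => (R s)⁻¹ i j) ((-((R t)⁻¹ * Rd * (R t)⁻¹)) i j) t := by
  -- The derivative of inversion is available in normed algebras, so a submultiplicative
  -- norm is used here.
  let _ : NormedRing (Matrix (Fin N) (Fin N) ℂ) := Matrix.linftyOpNormedRing
  let _ : NormedAlgebra ℝ (Matrix (Fin N) (Fin N) ℂ) := Matrix.linftyOpNormedAlgebra
  have hR' : HasDerivAt R Rd t := hasDerivAt_pi.2 fun i => hasDerivAt_pi.2 fun j => hR i j
  obtain ⟨u, hu⟩ := hRu
  have h := hasFDerivAt_ringInverse (𝕜 := ℝ) u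
  rw [hu] at h
  have h2 := h.comp_hasDerivAt t hR'
  have h3 := hasDerivAt_pi.1 (hasDerivAt_pi.1 h2 i) j
  have hui : (↑u⁻¹ : Matrix (Fin N) (Fin N) ℂ) = (R t)⁻¹ := by
    rw [← hu, Matrix.coe_units_inv]
  simpa [Function.comp_def, ← Matrix.nonsing_inv_eq_ringInverse, hui] using h3

/-- Entrywise product rule for matrices. -/
theorem hasDerivAt_mul_entry {N : ℕ} {A B : ℝ → Matrix (Fin N) (Fin N) ℂ}
    {Ad Bd : Matrix (Fin N) (Fin N) ℂ} {t : ℝ}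
    (hA : ∀ i j, HasDerivAt (fun s => A s i j) (Ad i j) t)
    (hB : ∀ i j, HasDerivAt (fun s => B s i j) (Bd i j) t) (i j : Fin N) :
    HasDerivAt (fun s => (A s * B s) i j) ((Ad * B t + A t * Bd) i j) t := by
  simp only [Matrix.add_apply, Matrix.mul_apply, ← Finset.sum_add_distrib]
  exact HasDerivAt.fun_sum fun k _ => (hA i k).mul (hB k j)

/-- The derivative of a conjugated curve, `(R⁻¹WR)' = R⁻¹W'R + [R⁻¹WR, R⁻¹R']`, entrywise. -/
theorem hasDerivAt_conj_entry {N : ℕ} {R W : ℝ → Matrix (Fin N) (Fin N) ℂ}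
    {Rd Wd : Matrix (Fin N) (Fin N) ℂ} {t : ℝ} (hRu : IsUnit (R t))
    (hR : ∀ i j, HasDerivAt (fun s => R s i j) (Rd i j) t)
    (hW : ∀ i j, HasDerivAt (fun s => W s i j) (Wd i j) t) (i j : Fin N) :
    HasDerivAt (fun s => ((R s)⁻¹ * W s * R s) i j)
      (((R t)⁻¹ * Wd * R t + ((R t)⁻¹ * W t * R t * ((R t)⁻¹ * Rd)
        - (R t)⁻¹ * Rd * ((R t)⁻¹ * W t * R t))) i j) t := by
  have h1 : R t * (R t)⁻¹ = 1 := Matrix.mul_nonsing_inv _ ((Matrix.isUnit_iff_isUnit_det _).1 hRu)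
  have h2 : (R t)⁻¹ * W t * R t * ((R t)⁻¹ * Rd) = (R t)⁻¹ * W t * Rd := by
    rw [Matrix.mul_assoc _ (R t), ← Matrix.mul_assoc (R t), h1, Matrix.one_mul]
  have e : (R t)⁻¹ * Wd * R t + ((R t)⁻¹ * W t * R t * ((R t)⁻¹ * Rd)
        - (R t)⁻¹ * Rd * ((R t)⁻¹ * W t * R t))
      = (-((R t)⁻¹ * Rd * (R t)⁻¹) * W t + (R t)⁻¹ * Wd) * R t + (R t)⁻¹ * W t * Rd := by
    rw [h2]
    noncomm_ring
  rw [e]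
  exact hasDerivAt_mul_entry (hasDerivAt_mul_entry (hasDerivAt_inv_entry hRu hR) hW) hR i j

/-- If `U, V` satisfy the matrix system (EqUV), `R` is differentiable and
everywhere invertible, and `Z = R⁻¹UR = diag(z₁,…,z_N)` with pairwise distinct
differentiable eigenvalues, then with `Y = R⁻¹VR` and `M̂ = R⁻¹R'`:
(a) `Y_{nn} = z_n' + z_n²`; (b) `M̂_{nm} = −Y_{nm}/(z_n − z_m)` for `n ≠ m`; and
(c) each `z_n` is twice differentiable and satisfies
`z_n'' = −3z_n'z_n + γz_n' − z_n³ + γz_n² + βz_n + α + 2Σ_{ℓ≠n} Y_{nℓ}Y_{ℓn}/(z_n − z_ℓ)`. -/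
theorem goldfish_stmt9 (N : ℕ) (hN : 0 < N) (α β γ : ℂ)
    (U V R Rd : ℝ → Matrix (Fin N) (Fin N) ℂ)
    (hU : ∀ t : ℝ, HasDerivAt U (-(U t * U t) + V t) t)
    (hV : ∀ t : ℝ, HasDerivAt V
      (-(U t * V t) + α • (1 : Matrix (Fin N) (Fin N) ℂ) + β • U t + γ • V t) t)
    (hR : ∀ t : ℝ, HasDerivAt R (Rd t) t)
    (hRu : ∀ t : ℝ, IsUnit (R t))
    (z zd : Fin N → ℝ → ℂ)
    (hz : ∀ n, ∀ t : ℝ, HasDerivAt (z n) (zd n t) t)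
    (hsep : ∀ t : ℝ, ∀ n m : Fin N, n ≠ m → z n t ≠ z m t)
    (hdiag : ∀ t : ℝ, (R t)⁻¹ * U t * R t = Matrix.diagonal (fun n => z n t))
    (Y Mh : ℝ → Matrix (Fin N) (Fin N) ℂ)
    (hY : ∀ t : ℝ, Y t = (R t)⁻¹ * V t * R t)
    (hM : ∀ t : ℝ, Mh t = (R t)⁻¹ * Rd t) :
    (∀ t : ℝ, ∀ n : Fin N, Y t n n = zd n t + (z n t) ^ 2) ∧
    (∀ t : ℝ, ∀ n m : Fin N, n ≠ m → Mh t n m = -(Y t n m) / (z n t - z m t)) ∧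
    (∀ n : Fin N, ∀ t : ℝ, HasDerivAt (zd n)
      (-3 * zd n t * z n t + γ * zd n t - (z n t) ^ 3 + γ * (z n t) ^ 2
        + β * z n t + α
        + 2 * ∑ ℓ ∈ Finset.univ.erase n, Y t n ℓ * Y t ℓ n / (z n t - z ℓ t)) t) := by
  have entry : ∀ {A : ℝ → Matrix (Fin N) (Fin N) ℂ} {Ad : Matrix (Fin N) (Fin N) ℂ} {t : ℝ},
      HasDerivAt A Ad t → ∀ i j, HasDerivAt (fun s => A s i j) (Ad i j) t :=
    fun h i j => hasDerivAt_pi.1 (hasDerivAt_pi.1 h i) j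
  have hRR : ∀ t, R t * (R t)⁻¹ = 1 := fun t =>
    Matrix.mul_nonsing_inv _ ((Matrix.isUnit_iff_isUnit_det _).1 (hRu t))
  have hRR' : ∀ t, (R t)⁻¹ * R t = 1 := fun t =>
    Matrix.nonsing_inv_mul _ ((Matrix.isUnit_iff_isUnit_det _).1 (hRu t))
  have conj_mul : ∀ t (A B : Matrix (Fin N) (Fin N) ℂ),
      (R t)⁻¹ * (A * B) * R t = ((R t)⁻¹ * A * R t) * ((R t)⁻¹ * B * R t) := by
    intro t A B
    calc (R t)⁻¹ * (A * B) * R t = (R t)⁻¹ * A * 1 * (B * R t) := by noncomm_ring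
      _ = (R t)⁻¹ * A * (R t * (R t)⁻¹) * (B * R t) := by rw [hRR]
      _ = _ := by noncomm_ring
  -- `Z' = -Z² + Y + [Z, M̂]`, entrywise
  have hZ : ∀ t i j, HasDerivAt (fun s => Matrix.diagonal (fun n => z n s) i j)
      ((-(Matrix.diagonal (fun n => z n t) * Matrix.diagonal (fun n => z n t)) + Y t
        + (Matrix.diagonal (fun n => z n t) * Mh t
          - Mh t * Matrix.diagonal (fun n => z n t))) i j) t := by
    intro t i j
    have h := hasDerivAt_conj_entry (hRu t) (entry (hR t)) (entry (hU t)) i j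
    have e : (R t)⁻¹ * (-(U t * U t) + V t) * R t
        = -((R t)⁻¹ * (U t * U t) * R t) + (R t)⁻¹ * V t * R t := by noncomm_ring
    rw [e, conj_mul] at h
    simpa only [hdiag, ← hY, ← hM] using h
  -- `Y' = -ZY + α + βZ + γY + [Y, M̂]`, entrywise
  have hYd : ∀ t i j, HasDerivAt (fun s => Y s i j)
      ((-(Matrix.diagonal (fun n => z n t) * Y t) + α • (1 : Matrix (Fin N) (Fin N) ℂ)
        + β • Matrix.diagonal (fun n => z n t) + γ • Y t
        + (Y t * Mh t - Mh t * Y t)) i j) t := by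
    intro t i j
    have h := hasDerivAt_conj_entry (hRu t) (entry (hR t)) (entry (hV t)) i j
    have e : (R t)⁻¹ * (-(U t * V t) + α • (1 : Matrix (Fin N) (Fin N) ℂ) + β • U t + γ • V t)
          * R t
        = -((R t)⁻¹ * (U t * V t) * R t) + α • (1 : Matrix (Fin N) (Fin N) ℂ)
          + β • ((R t)⁻¹ * U t * R t) + γ • ((R t)⁻¹ * V t * R t) := by
      simp only [Matrix.mul_add, Matrix.add_mul, Matrix.mul_neg, Matrix.neg_mul,
        Matrix.mul_smul, Matrix.smul_mul, Matrix.mul_one, hRR']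
    rw [e, conj_mul] at h
    simpa only [hdiag, ← hY, ← hM] using h
  have ha : ∀ t n, Y t n n = zd n t + (z n t) ^ 2 := by
    intro t n
    have h := hZ t n n
    simp only [Matrix.diagonal_apply_eq] at h
    have e := (hz n t).unique h
    simp only [Matrix.add_apply, Matrix.sub_apply, Matrix.neg_apply, Matrix.diagonal_mul,
      Matrix.mul_diagonal, Matrix.diagonal_apply_eq] at e
    rw [e]; ring
  have hb : ∀ t n m, n ≠ m → Mh t n m = -(Y t n m) / (z n t - z m t) := by
    intro t n m hnm
    have h := hZ t n m
    simp only [Matrix.diagonal_apply_ne _ hnm] at h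
    have e := (hasDerivAt_const t (0 : ℂ)).unique h
    simp only [Matrix.add_apply, Matrix.sub_apply, Matrix.neg_apply, Matrix.diagonal_mul,
      Matrix.mul_diagonal, Matrix.diagonal_apply_ne _ hnm] at e
    rw [eq_div_iff (sub_ne_zero.2 (hsep t n m hnm))]
    linear_combination -e
  refine ⟨ha, hb, fun n t => ?_⟩
  have hzd : zd n = fun s => Y s n n - (z n s) ^ 2 := by
    funext s; rw [ha]; ring
  have hcomm : (Y t * Mh t - Mh t * Y t) n n
      = 2 * ∑ ℓ ∈ Finset.univ.erase n, Y t n ℓ * Y t ℓ n / (z n t - z ℓ t) := by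
    rw [Matrix.sub_apply, Matrix.mul_apply, Matrix.mul_apply, ← Finset.sum_sub_distrib,
      ← Finset.add_sum_erase _ _ (Finset.mem_univ n), Finset.mul_sum, mul_comm (Y t n n),
      sub_self, zero_add]
    refine Finset.sum_congr rfl fun ℓ hℓ => ?_
    have hne := Finset.ne_of_mem_erase hℓ
    have h1 : z n t - z ℓ t ≠ 0 := sub_ne_zero.2 (hsep t n ℓ hne.symm)
    rw [hb t ℓ n hne, hb t n ℓ hne.symm, ← neg_sub (z n t) (z ℓ t)]
    field_simp
    ring
  have h := (hYd t n n).sub ((hz n t).pow 2)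
  rw [Matrix.add_apply, hcomm] at h
  refine (h.congr_of_eventuallyEq (Filter.Eventually.of_forall (congrFun hzd))).congr_deriv ?_
  simp only [Matrix.add_apply, Matrix.neg_apply, Matrix.smul_apply, Matrix.diagonal_mul,
    Matrix.diagonal_apply_eq, Matrix.one_apply_eq, smul_eq_mul, ha]
  push_cast
  ring
end

section
/- Let a, b, c, α, β, γ be complex numbers satisfying the four constraints (2c − 3)·c = −1, γ·c + 3b·(c − 1) = γ, a·(2c − 3) + b·(γ + b) = β, a·(γ + b) = α, and set f(z) = a + b·z + c·z². Let z₁,…,z_N : ℝ → ℂ be twice differentiable with z_n(t) pairwise distinct for every t, satisfying for all n and t the Newtonian equations z_n'' = −3·z_n'·z_n + γ·z_n' − z_n³ + γ·z_n² + β·z_n + α + Σ_{ℓ≠n} 2·(z_n' + f(z_n))·(z_ℓ' + f(z_ℓ))/(z_n − z_ℓ). Let v₁,…,v_N : ℝ → ℂ be differentiable, nowhere vanishing, with v_n(t)² = z_n'(t) + f(z_n(t)) for all t. Define y_n = z_n' + z_n², μ_n = −z_n/2, and, for j ≠ k, Y_{jk} = v_j·v_k and M̂_{jk} = −v_j·v_k/(z_j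 − z_k). Then for all n ≠ m and all t the off-diagonal evolution equations hold: (d/dt)(v_n·v_m) = −(z_n − γ)·v_n·v_m − (μ_n − μ_m)·v_n·v_m + (y_n − y_m)·M̂_{nm} + Σ_{ℓ≠n,m} (Y_{nℓ}·M̂_{ℓm} − M̂_{nℓ}·Y_{ℓm}). -/
open Finset

/-!
Differentiating `v_n² = z_n' + f(z_n)` and inserting the Newtonian equation, the four constraints
say exactly that the one-body part of the result factors as
`(z_n' + f(z_n)) * ((γ + b) + (2c - 3) z_n)`. Hence, dividing by `2 v_n`, one gets the first-order
equation `v_n' = v_n * (((γ + b) + (2c - 3) z_n)/2 + ∑_{ℓ ≠ n} v_ℓ² / (z_n - z_ℓ))`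
(`goldfish_vd`). In `(v_n v_m)' = v_n' v_m + v_n v_m'` the terms with `ℓ ≠ n, m` give the sum in
the claim, and the two remaining ones combine to `(v_m² - v_n²)/(z_n - z_m)`, in which the
contributions of `b` and `c` cancel those of the one-body parts.
-/

/-- The logarithmic derivative of `v_n`: the constraints make the one-body force divisible by
`v_n² = z_n' + f(z_n)`. -/
lemma goldfish_vd {N : ℕ} {a b c α β γ : ℂ}
    (hc1 : (2 * c - 3) * c = -1)
    (hc2 : γ * c + 3 * b * (c - 1) = γ)
    (hc3 : a * (2 * c - 3) + b * (γ + b) = β)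
    (hc4 : a * (γ + b) = α)
    {z zd zdd : Fin N → ℝ → ℂ}
    (hz : ∀ n, ∀ t : ℝ, HasDerivAt (z n) (zd n t) t)
    (hzd : ∀ n, ∀ t : ℝ, HasDerivAt (zd n) (zdd n t) t)
    (hNewton : ∀ n, ∀ t : ℝ, zdd n t =
      -3 * zd n t * z n t + γ * zd n t - (z n t) ^ 3 + γ * (z n t) ^ 2
        + β * z n t + α
        + ∑ ℓ ∈ Finset.univ.erase n,
            2 * (zd n t + (a + b * z n t + c * (z n t) ^ 2))
              * (zd ℓ t + (a + b * z ℓ t + c * (z ℓ t) ^ 2)) / (z n t - z ℓ t))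
    {v vd : Fin N → ℝ → ℂ}
    (hv : ∀ n, ∀ t : ℝ, HasDerivAt (v n) (vd n t) t)
    (hv0 : ∀ n, ∀ t : ℝ, v n t ≠ 0)
    (hv2 : ∀ n, ∀ t : ℝ, (v n t) ^ 2 = zd n t + (a + b * z n t + c * (z n t) ^ 2))
    (n : Fin N) (t : ℝ) :
    vd n t = v n t * (((γ + b) + (2 * c - 3) * z n t) / 2
      + ∑ ℓ ∈ Finset.univ.erase n, (v ℓ t) ^ 2 / (z n t - z ℓ t)) := by
  have hl : HasDerivAt (fun s => v n s * v n s) (vd n t * v n t + v n t * vd n t) t :=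
    (hv n t).mul (hv n t)
  have hr : HasDerivAt (fun s => zd n s + (a + b * z n s + c * (z n s * z n s)))
      (zdd n t + (b * zd n t + c * (zd n t * z n t + z n t * zd n t))) t :=
    (hzd n t).add ((((hz n t).const_mul b).const_add a).add
      (((hz n t).mul (hz n t)).const_mul c))
  have hfun : (fun s => v n s * v n s)
      = fun s => zd n s + (a + b * z n s + c * (z n s * z n s)) := by
    funext s
    linear_combination hv2 n s
  rw [hfun] at hl
  have hd := hl.unique hr
  have hS : (∑ ℓ ∈ Finset.univ.erase n,
      2 * (zd n t + (a + b * z n t + c * (z n t) ^ 2))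
        * (zd ℓ t + (a + b * z ℓ t + c * (z ℓ t) ^ 2)) / (z n t - z ℓ t))
      = 2 * (v n t) ^ 2 * ∑ ℓ ∈ Finset.univ.erase n, (v ℓ t) ^ 2 / (z n t - z ℓ t) := by
    rw [Finset.mul_sum]
    refine Finset.sum_congr rfl fun ℓ _ => ?_
    rw [← hv2 n t, ← hv2 ℓ t, mul_div_assoc]
  have hN := hNewton n t
  rw [hS] at hN
  generalize (∑ ℓ ∈ Finset.univ.erase n, (v ℓ t) ^ 2 / (z n t - z ℓ t)) = S at hN ⊢
  apply mul_left_cancel₀ (mul_ne_zero two_ne_zero (hv0 n t))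
  linear_combination hd + hN - ((γ + b) + (2 * c - 3) * z n t) * hv2 n t
    - z n t ^ 3 * hc1 - z n t ^ 2 * hc2 - z n t * hc3 - hc4

/-- Under the four constraints on `a, b, c, α, β, γ`, with `f(z) = a+bz+cz²`,
if `z₁,…,z_N` (pairwise distinct, twice differentiable) satisfy the Newtonian equations and
`v_n` are differentiable, nowhere vanishing, with `v_n² = z_n' + f(z_n)`, then setting
`y_n = z_n' + z_n²`, `μ_n = −z_n/2`, `Y_{jk} = v_j v_k`, `M̂_{jk} = −v_j v_k/(z_j − z_k)`
(for `j ≠ k`), the off-diagonal evolution equations hold: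
`(v_n v_m)' = −(z_n−γ)v_n v_m − (μ_n−μ_m)v_n v_m + (y_n−y_m)M̂_{nm}
  + Σ_{ℓ≠n,m}(Y_{nℓ}M̂_{ℓm} − M̂_{nℓ}Y_{ℓm})`. -/
theorem goldfish_stmt11 (N : ℕ) (hN : 0 < N) (a b c α β γ : ℂ)
    (hc1 : (2 * c - 3) * c = -1)
    (hc2 : γ * c + 3 * b * (c - 1) = γ)
    (hc3 : a * (2 * c - 3) + b * (γ + b) = β)
    (hc4 : a * (γ + b) = α)
    (z zd zdd : Fin N → ℝ → ℂ)
    (hz : ∀ n, ∀ t : ℝ, HasDerivAt (z n) (zd n t) t)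
    (hzd : ∀ n, ∀ t : ℝ, HasDerivAt (zd n) (zdd n t) t)
    (hsep : ∀ t : ℝ, ∀ n m : Fin N, n ≠ m → z n t ≠ z m t)
    (hNewton : ∀ n, ∀ t : ℝ, zdd n t =
      -3 * zd n t * z n t + γ * zd n t - (z n t) ^ 3 + γ * (z n t) ^ 2
        + β * z n t + α
        + ∑ ℓ ∈ Finset.univ.erase n,
            2 * (zd n t + (a + b * z n t + c * (z n t) ^ 2))
              * (zd ℓ t + (a + b * z ℓ t + c * (z ℓ t) ^ 2)) / (z n t - z ℓ t))
    (v vd : Fin N → ℝ → ℂ)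
    (hv : ∀ n, ∀ t : ℝ, HasDerivAt (v n) (vd n t) t)
    (hv0 : ∀ n, ∀ t : ℝ, v n t ≠ 0)
    (hv2 : ∀ n, ∀ t : ℝ, (v n t) ^ 2 = zd n t + (a + b * z n t + c * (z n t) ^ 2)) :
    ∀ t : ℝ, ∀ n m : Fin N, n ≠ m →
      HasDerivAt (fun s => v n s * v m s)
        (-(z n t - γ) * (v n t * v m t)
          - ((-(z n t) / 2) - (-(z m t) / 2)) * (v n t * v m t)
          + ((zd n t + (z n t) ^ 2) - (zd m t + (z m t) ^ 2))
            * (-(v n t * v m t) / (z n t - z m t))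
          + ∑ ℓ ∈ (Finset.univ.erase n).erase m,
              ((v n t * v ℓ t) * (-(v ℓ t * v m t) / (z ℓ t - z m t))
                - (-(v n t * v ℓ t) / (z n t - z ℓ t)) * (v ℓ t * v m t))) t := by
  intro t n m hnm
  have hvd := goldfish_vd hc1 hc2 hc3 hc4 hz hzd hNewton hv hv0 hv2
  have hne : z n t - z m t ≠ 0 := sub_ne_zero.mpr (hsep t n m hnm)
  refine ((hv n t).mul (hv m t)).congr_deriv ?_
  rw [hvd n t, hvd m t,
    ← Finset.add_sum_erase (Finset.univ.erase n) _
      (Finset.mem_erase.mpr ⟨hnm.symm, Finset.mem_univ m⟩),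
    ← Finset.add_sum_erase (Finset.univ.erase m) _
      (Finset.mem_erase.mpr ⟨hnm, Finset.mem_univ n⟩),
    Finset.erase_right_comm (a := m) (b := n)]
  have hsum : (∑ ℓ ∈ (Finset.univ.erase n).erase m,
      ((v n t * v ℓ t) * (-(v ℓ t * v m t) / (z ℓ t - z m t))
        - (-(v n t * v ℓ t) / (z n t - z ℓ t)) * (v ℓ t * v m t)))
      = v n t * v m t * ((∑ ℓ ∈ (Finset.univ.erase n).erase m, (v ℓ t) ^ 2 / (z n t - z ℓ t))
        + ∑ ℓ ∈ (Finset.univ.erase n).erase m, (v ℓ t) ^ 2 / (z m t - z ℓ t)) := by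
    rw [← Finset.sum_add_distrib, Finset.mul_sum]
    refine Finset.sum_congr rfl fun ℓ _ => ?_
    rw [← neg_sub (z m t) (z ℓ t), neg_div_neg_eq]
    ring
  rw [hsum]
  -- In the mutual interaction of `n` and `m`, the polynomial `f` contributes only `-b - c (z_n + z_m)`.
  have hpair : (v m t) ^ 2 / (z n t - z m t) + (v n t) ^ 2 / (z m t - z n t)
      = -((zd n t - zd m t) / (z n t - z m t)) - b - c * (z n t + z m t) := by
    rw [← neg_sub (z n t) (z m t), hv2 n t, hv2 m t]
    field_simp
    ring
  have hy : ((zd n t + (z n t) ^ 2) - (zd m t + (z m t) ^ 2))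
      * (-(v n t * v m t) / (z n t - z m t))
      = -(v n t * v m t) * ((zd n t - zd m t) / (z n t - z m t) + (z n t + z m t)) := by
    field_simp
    ring
  rw [hy]
  linear_combination v n t * v m t * hpair
end

section
/- Let c be a complex number, ω a nonzero real number, and τ(t) = (exp(iωt) − 1)/(iω). Let Ω ⊆ ℂ be an open set containing {τ(t) : t ∈ ℝ} and let ζ₁,…,ζ_N : Ω → ℂ be twice complex-differentiable with ζ_n(τ(t)) pairwise distinct for every real t, satisfying on Ω the equations ζ_n'' = −3·ζ_n'·ζ_n − ζ_n³ + Σ_{ℓ≠n} 2·(ζ_n' + c·ζ_ℓ·0 + c·ζ_n²)·(ζ_ℓ' + c·ζ_ℓ²)/(ζ_n − ζ_ℓ), i.e. ζ_n'' = −3·ζ_n'·ζ_n − ζ_n³ + Σ_{ℓ≠n} 2·(ζ_n' + c·ζ_n²)·(ζ_ℓ' + c·ζ_ℓ²)/(ζ_n − ζ_ℓ), where primes denote complex derivatives. Define z̃_n(t) = exp(iωt)·ζ_n(τ(t)) for real t. Then each z̃_n is twice differentiable in t and satisfies for all n and t: z̃_n'' = 3iω·z̃_n' + 2ω²·z̃_n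 − 3·z̃_n'·z̃_n + 3iω·z̃_n² − z̃_n³ + Σ_{ℓ≠n} 2·(z̃_n' − iω·z̃_n + c·z̃_n²)·(z̃_ℓ' − iω·z̃_ℓ + c·z̃_ℓ²)/(z̃_n − z̃_ℓ), where now primes denote derivatives with respect to the real time t. -/
/-!
Write `E = e^{iωt}`, so `E' = iωE` and `τ' = E`. Then `z̃ = E ζ(τ)` gives `z̃' = iω z̃ + E² ζ'(τ)` and
`z̃'' = -ω² z̃ + 3iω E² ζ'(τ) + E³ ζ''(τ)`. Since `z̃' - iω z̃ + c z̃² = E² (ζ' + c ζ²)`, every term of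
the right-hand side of the equation for `ζ` is homogeneous of weight `3` in `E`, so multiplying that
equation by `E³` and eliminating `ζ'` yields the equation for `z̃`.
-/

open Finset

/-- "the trick": If `ζ₁,…,ζ_N` are twice complex-differentiable on an open
set `Ω` containing the curve `τ(t) = (e^{iωt} − 1)/(iω)`, take pairwise distinct values
along the curve, and satisfy `ζ_n'' = −3ζ_n'ζ_n − ζ_n³ + Σ_{ℓ≠n} 2(ζ_n' + cζ_n²)(ζ_ℓ' + cζ_ℓ²)/(ζ_n − ζ_ℓ)`
on `Ω`, then `z̃_n(t) = e^{iωt}·ζ_n(τ(t))` is twice differentiable in `t` and satisfies the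
isochronous goldfish equations. -/
theorem goldfish_stmt15 (N : ℕ) (hN : 0 < N) (c : ℂ) (ω : ℝ) (hω : ω ≠ 0)
    (τ : ℝ → ℂ)
    (hτ : ∀ t : ℝ, τ t = (Complex.exp (Complex.I * (ω : ℂ) * (t : ℂ)) - 1)
      / (Complex.I * (ω : ℂ)))
    (Ω : Set ℂ) (hΩopen : IsOpen Ω) (hΩτ : ∀ t : ℝ, τ t ∈ Ω)
    (ζ ζd ζdd : Fin N → ℂ → ℂ)
    (hζ : ∀ n, ∀ w ∈ Ω, HasDerivAt (ζ n) (ζd n w) w)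
    (hζd : ∀ n, ∀ w ∈ Ω, HasDerivAt (ζd n) (ζdd n w) w)
    (hsep : ∀ t : ℝ, ∀ n m : Fin N, n ≠ m → ζ n (τ t) ≠ ζ m (τ t))
    (hEq : ∀ n, ∀ w ∈ Ω, ζdd n w =
      -3 * ζd n w * ζ n w - (ζ n w) ^ 3
        + ∑ ℓ ∈ Finset.univ.erase n,
            2 * (ζd n w + c * (ζ n w) ^ 2) * (ζd ℓ w + c * (ζ ℓ w) ^ 2)
              / (ζ n w - ζ ℓ w))
    (zt : Fin N → ℝ → ℂ)
    (hzt : ∀ n, ∀ t : ℝ, zt n t = Complex.exp (Complex.I * (ω : ℂ) * (t : ℂ)) * ζ n (τ t)) :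
    ∃ ztd : Fin N → ℝ → ℂ,
      (∀ n, ∀ t : ℝ, HasDerivAt (zt n) (ztd n t) t) ∧
      (∀ n, ∀ t : ℝ, HasDerivAt (ztd n)
        (3 * Complex.I * (ω : ℂ) * ztd n t + 2 * (ω : ℂ) ^ 2 * zt n t
          - 3 * ztd n t * zt n t + 3 * Complex.I * (ω : ℂ) * (zt n t) ^ 2 - (zt n t) ^ 3
          + ∑ ℓ ∈ Finset.univ.erase n,
              2 * (ztd n t - Complex.I * (ω : ℂ) * zt n t + c * (zt n t) ^ 2)
                * (ztd ℓ t - Complex.I * (ω : ℂ) * zt ℓ t + c * (zt ℓ t) ^ 2)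
                / (zt n t - zt ℓ t)) t) := by
  set E : ℝ → ℂ := fun t => Complex.exp (Complex.I * (ω : ℂ) * (t : ℂ)) with hE
  have hωc : Complex.I * (ω : ℂ) ≠ 0 :=
    mul_ne_zero Complex.I_ne_zero (Complex.ofReal_ne_zero.mpr hω)
  have hE0 : ∀ t, E t ≠ 0 := fun t => Complex.exp_ne_zero _
  have hEd : ∀ t : ℝ, HasDerivAt E (Complex.I * ω * E t) t := by
    intro t
    have h := ((Complex.ofRealCLM.hasDerivAt (x := t)).const_mul (Complex.I * (ω : ℂ))).cexp
    refine h.congr_deriv ?_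
    simp [hE, mul_comm]
  have hτd : ∀ t : ℝ, HasDerivAt τ (E t) t := by
    intro t
    have h := ((hEd t).sub_const 1).div_const (Complex.I * (ω : ℂ))
    rw [show τ = fun t => (E t - 1) / (Complex.I * (ω : ℂ)) from funext hτ]
    exact h.congr_deriv (by rw [mul_div_cancel_left₀ _ hωc])
  have hζτ : ∀ n t, HasDerivAt (fun t => ζ n (τ t)) (ζd n (τ t) * E t) t := fun n t =>
    (hζ n _ (hΩτ t)).comp t (hτd t)
  have hζdτ : ∀ n t, HasDerivAt (fun t => ζd n (τ t)) (ζdd n (τ t) * E t) t := fun n t =>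
    (hζd n _ (hΩτ t)).comp t (hτd t)
  have hzt' : ∀ n t, zt n t = E t * ζ n (τ t) := hzt
  refine ⟨fun n t => Complex.I * ω * E t * ζ n (τ t) + E t * (ζd n (τ t) * E t), ?_, ?_⟩
  · intro n t
    rw [show zt n = fun t => E t * ζ n (τ t) from funext (hzt n)]
    exact (hEd t).mul (hζτ n t)
  · intro n t
    have h := (((hEd t).const_mul (Complex.I * (ω : ℂ))).mul (hζτ n t)).add
      ((hEd t).mul ((hζdτ n t).mul (hEd t)))
    refine h.congr_deriv ?_
    -- Each interaction term scales by `E ^ 3`: `E ^ 2` from each factor, `E⁻¹` from the denominator.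
    have hsum : ∑ ℓ ∈ Finset.univ.erase n,
        2 * ((Complex.I * ω * E t * ζ n (τ t) + E t * (ζd n (τ t) * E t))
              - Complex.I * (ω : ℂ) * zt n t + c * (zt n t) ^ 2)
          * ((Complex.I * ω * E t * ζ ℓ (τ t) + E t * (ζd ℓ (τ t) * E t))
              - Complex.I * (ω : ℂ) * zt ℓ t + c * (zt ℓ t) ^ 2)
          / (zt n t - zt ℓ t)
        = E t ^ 3 * ∑ ℓ ∈ Finset.univ.erase n,
            2 * (ζd n (τ t) + c * (ζ n (τ t)) ^ 2) * (ζd ℓ (τ t) + c * (ζ ℓ (τ t)) ^ 2)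
              / (ζ n (τ t) - ζ ℓ (τ t)) := by
      rw [Finset.mul_sum]
      refine Finset.sum_congr rfl fun ℓ hℓ => ?_
      have hd : ζ n (τ t) - ζ ℓ (τ t) ≠ 0 :=
        sub_ne_zero.mpr (hsep t n ℓ (Finset.ne_of_mem_erase hℓ).symm)
      rw [hzt', hzt', ← mul_sub, mul_div_assoc', div_eq_div_iff (mul_ne_zero (hE0 t) hd) hd]
      ring
    rw [hsum, hEq n _ (hΩτ t), hzt', Pi.mul_apply]
    linear_combination (-2 * (ω : ℂ) ^ 2 * E t * ζ n (τ t)) * Complex.I_sq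
end

section
/- Let a, b, γ be complex numbers, set α = a·(γ + b) and β = −a + b·(γ + b), and let z₁,…,z_N : ℝ → ℂ be twice differentiable with pairwise distinct values for every t, satisfying the model (i) equations z_n'' = −3·z_n'·z_n + γ·z_n' − z_n³ + γ·z_n² + β·z_n + α + Σ_{ℓ≠n} 2·(z_n' + a + b·z_n + z_n²)·(z_ℓ' + a + b·z_ℓ + z_ℓ²)/(z_n − z_ℓ). Define c_m(t) = (−1)^m·e_m(z₁(t),…,z_N(t)) for m = 1,…,N, where e_m is the m-th elementary symmetric polynomial, with the conventions c₀ = 1 and c_m = 0 for m < 0 or m > N. Then for every m = 1,…,N and every t: c_m'' + p_m^{(−1)}·c_{m−1}' + p_m^{(0)}·c_m' + p_m^{(1)}·c_{m+1}' + q_m^{(−2)}·c_{m−2} + q_m^{(−1)}·c_{m−1} + q_m^{(0)}·c_m + q_m^{(1)}·c_{m+1} + q_m^{(2)}·c_{m+2} = 2·c₁·c_m' − 2(N−m+1)·a·c₁·c_{m−1} + [c₁' − c₁² + 2(m−1)·b·c₁ − γ·c₁]·c_m + (2m+1)·c₁·c_{m+1}, where p_m^{(−1)} = −2(N−m+1)·a,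 p_m^{(0)} = 2(m−1)·b − γ, p_m^{(1)} = 2m+1, q_m^{(−2)} = (N−m+2)(N−m+1)·a², q_m^{(−1)} = (N−m+1)·[−(2m−3)·b + γ]·a, q_m^{(0)} = −m(2N−2m+1)·a + m(m−2)·b² − m·b·γ, q_m^{(1)} = 2(m²−1)·b − (m+1)·γ, q_m^{(2)} = m(m+2). -/
/-!
Fix `t` and let `P = ∏ (X - z n)`, whose coefficient of `X ^ (N - m)` is `c_m`; let `A`, `B` be its
first and second time derivatives, taken coefficientwise. Multiplication of the coefficient of
`X ^ (N - m)` by `m` is the operator `N - X d/dX`, so the difference of the two sides of the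
system, over all integers `m`, is the coefficient sequence of a single polynomial `goldfishPoly`,
linear in `P`, `A`, `B` and their `X`-derivatives.

* Its coefficients of `X ^ k` with `k ≥ N` vanish, by `c_0 = 1` and `c_m = 0` for `m < 0`.
* It vanishes at each root `z n`: with `P = (X - z n) * Q`, the values of `P`, `A`, `B` and of their
  derivatives at `z n` are expressed by `Q`, `∂Q/∂X` and `∂Q/∂t` there, and the logarithmic
  derivatives of `Q` at `z n` are `∑ 1 / (z n - z ℓ)` and `-∑ z ℓ' / (z n - z ℓ)`
  (`exists_deriv_prod`). The equation of motion then makes everything cancel.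

A polynomial of degree less than `N` with `N` distinct roots is zero, so all coefficients vanish.
Coefficients are indexed by integers (`intCoeff`), which removes boundary cases.
-/

open Finset

open Polynomial

/-- The coefficient of `X ^ k` in `p`, for an integer `k`, with value `0` when `k < 0`. -/
noncomputable def intCoeff (p : ℂ[X]) (k : ℤ) : ℂ := if 0 ≤ k then p.coeff k.toNat else 0

lemma intCoeff_natCast (p : ℂ[X]) (k : ℕ) : intCoeff p k = p.coeff k := by
  simp [intCoeff]

lemma intCoeff_of_neg (p : ℂ[X]) {k : ℤ} (hk : k < 0) : intCoeff p k = 0 := by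
  simp [intCoeff, hk]

lemma intCoeff_add (p q : ℂ[X]) (k : ℤ) : intCoeff (p + q) k = intCoeff p k + intCoeff q k := by
  unfold intCoeff; split_ifs <;> simp

lemma intCoeff_sub (p q : ℂ[X]) (k : ℤ) : intCoeff (p - q) k = intCoeff p k - intCoeff q k := by
  unfold intCoeff; split_ifs <;> simp

lemma intCoeff_C_mul (c : ℂ) (p : ℂ[X]) (k : ℤ) : intCoeff (C c * p) k = c * intCoeff p k := by
  unfold intCoeff; split_ifs <;> simp

lemma intCoeff_X_mul (p : ℂ[X]) (k : ℤ) : intCoeff (X * p) k = intCoeff p (k - 1) := by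
  rcases lt_trichotomy k 0 with hk | rfl | hk
  · rw [intCoeff_of_neg _ hk, intCoeff_of_neg _ (by lia)]
  · simp [intCoeff]
  · obtain ⟨j, rfl⟩ : ∃ j : ℕ, k = ((j + 1 : ℕ) : ℤ) := ⟨(k - 1).toNat, by lia⟩
    rw [intCoeff_natCast, show ((j + 1 : ℕ) : ℤ) - 1 = (j : ℤ) by push_cast; ring,
      intCoeff_natCast, coeff_X_mul]

lemma intCoeff_derivative (p : ℂ[X]) (k : ℤ) :
    intCoeff (derivative p) k = (k + 1) * intCoeff p (k + 1) := by
  rcases lt_or_ge k 0 with hk | hk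
  · rw [intCoeff_of_neg _ hk]
    rcases eq_or_ne k (-1) with rfl | h
    · simp
    · rw [intCoeff_of_neg _ (by lia), mul_zero]
  · obtain ⟨j, rfl⟩ := Int.eq_ofNat_of_zero_le hk
    rw [intCoeff_natCast, show (j : ℤ) + 1 = ((j + 1 : ℕ) : ℤ) by push_cast; ring,
      intCoeff_natCast, coeff_derivative]
    push_cast; ring

/-- `N - X d/dX`, the operator multiplying the coefficient of `X ^ (N - m)` by `m`. -/
noncomputable def coEuler (N : ℕ) (p : ℂ[X]) : ℂ[X] := C (N : ℂ) * p - X * derivative p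

lemma intCoeff_coEuler (N : ℕ) (p : ℂ[X]) (k : ℤ) :
    intCoeff (coEuler N p) k = (N - k) * intCoeff p k := by
  rw [coEuler, intCoeff_sub, intCoeff_C_mul, intCoeff_X_mul, intCoeff_derivative]
  rw [sub_add_cancel]; push_cast; ring

/-- Coefficientwise differentiability of a time-dependent polynomial: `p' t` is the time
derivative of `p` at every `t`. -/
def HasCoeffDeriv (p p' : ℝ → ℂ[X]) : Prop :=
  ∀ k t, HasDerivAt (fun s => (p s).coeff k) ((p' t).coeff k) t

lemma HasCoeffDeriv.add {p p' q q' : ℝ → ℂ[X]} (hp : HasCoeffDeriv p p')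
    (hq : HasCoeffDeriv q q') : HasCoeffDeriv (fun t => p t + q t) (fun t => p' t + q' t) := by
  intro k t
  simpa only [coeff_add] using (hp k t).fun_add (hq k t)

lemma HasCoeffDeriv.mul {p p' q q' : ℝ → ℂ[X]} (hp : HasCoeffDeriv p p')
    (hq : HasCoeffDeriv q q') :
    HasCoeffDeriv (fun t => p t * q t) (fun t => p' t * q t + p t * q' t) := by
  intro k t
  simp only [coeff_add, coeff_mul, ← Finset.sum_add_distrib]
  exact HasDerivAt.fun_sum fun x _ => (hp x.1 t).fun_mul (hq x.2 t)

lemma HasCoeffDeriv.C {f f' : ℝ → ℂ} (hf : ∀ t, HasDerivAt f (f' t) t) :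
    HasCoeffDeriv (fun t => C (f t)) (fun t => C (f' t)) := by
  intro k t
  simp only [coeff_C]
  split_ifs
  · exact hf t
  · exact hasDerivAt_const _ _

lemma HasCoeffDeriv.X_sub_C {f f' : ℝ → ℂ} (hf : ∀ t, HasDerivAt f (f' t) t) :
    HasCoeffDeriv (fun t => X - Polynomial.C (f t)) (fun t => Polynomial.C (-f' t)) := by
  intro k t
  simp only [coeff_sub, coeff_C]
  split_ifs
  · exact (hf t).const_sub _
  · exact hasDerivAt_const _ _

lemma HasCoeffDeriv.unique {p p' q' : ℝ → ℂ[X]} (h : HasCoeffDeriv p p')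
    (hq : HasCoeffDeriv p q') (t : ℝ) : p' t = q' t :=
  Polynomial.ext fun k => (h k t).unique (hq k t)

/-- Twice-differentiability in time of `∏ (X - z i)`, together with the logarithmic derivatives
in time and in `X` away from the roots. -/
lemma exists_deriv_prod {ι : Type*} (z zd zdd : ι → ℝ → ℂ)
    (hz : ∀ n, ∀ t : ℝ, HasDerivAt (z n) (zd n t) t)
    (hzd : ∀ n, ∀ t : ℝ, HasDerivAt (zd n) (zdd n t) t) (s : Finset ι) :
    ∃ Qd Qdd : ℝ → ℂ[X],
      HasCoeffDeriv (fun t => ∏ i ∈ s, (X - C (z i t))) Qd ∧ HasCoeffDeriv Qd Qdd ∧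
      ∀ t x, (∀ i ∈ s, x - z i t ≠ 0) →
        (Qd t).eval x = -((∏ i ∈ s, (X - C (z i t))).eval x * ∑ i ∈ s, zd i t / (x - z i t)) ∧
        (derivative (∏ i ∈ s, (X - C (z i t)))).eval x =
          (∏ i ∈ s, (X - C (z i t))).eval x * ∑ i ∈ s, 1 / (x - z i t) := by
  classical
  induction s using Finset.induction_on with
  | empty =>
    refine ⟨fun _ => 0, fun _ => 0, ?_, ?_, ?_⟩
    · intro k t; simpa using hasDerivAt_const _ _
    · intro k t; simpa using hasDerivAt_const _ _
    · intro t x _; simp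
  | insert n s hn ih =>
    obtain ⟨Qd, Qdd, h1, h2, h3⟩ := ih
    have hX := HasCoeffDeriv.X_sub_C (hz n)
    have hD := HasCoeffDeriv.C (fun t => (hzd n t).fun_neg)
    simp only [Finset.prod_insert hn, Finset.sum_insert hn]
    refine ⟨_, _, hX.mul h1, (hD.mul h1).add (hX.mul h2), fun t x hx => ?_⟩
    have hxn := hx n (Finset.mem_insert_self _ _)
    obtain ⟨e1, e2⟩ := h3 t x fun i hi => hx i (Finset.mem_insert_of_mem hi)
    simp only [derivative_mul, eval_add, eval_mul, eval_C, eval_sub, eval_X, derivative_sub,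
      derivative_X, derivative_C, e1, e2, eval_one, sub_zero]
    constructor
    · field_simp
      ring
    · field_simp

/-- The coefficients of `∏ (X - z i)` are the signed elementary symmetric polynomials. -/
lemma intCoeff_prod (N : ℕ) (z : Fin N → ℂ) (k : ℤ) :
    intCoeff (∏ i, (X - C (z i))) k =
      if 0 ≤ (N : ℤ) - k ∧ (N : ℤ) - k ≤ N then
        (-1 : ℂ) ^ ((N : ℤ) - k).toNat *
          ∑ s ∈ Finset.univ.powersetCard ((N : ℤ) - k).toNat, ∏ n ∈ s, z n
      else 0 := by
  rcases lt_or_ge k 0 with hk | hk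
  · rw [intCoeff_of_neg _ hk, if_neg (by lia)]
  obtain ⟨j, rfl⟩ := Int.eq_ofNat_of_zero_le hk
  rw [intCoeff_natCast]
  split_ifs with h
  · have hj : j ≤ N := by lia
    have := Multiset.prod_X_sub_C_coeff ((Finset.univ : Finset (Fin N)).val.map z) (k := j)
      (by simpa using hj)
    rw [Multiset.map_map] at this
    have e := Finset.esymm_map_val z (Finset.univ : Finset (Fin N)) (N - j)
    rw [Finset.prod_eq_multiset_prod, show ((N : ℤ) - j).toNat = N - j by lia, ← e]
    simpa using this
  · apply coeff_eq_zero_of_natDegree_lt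
    rw [natDegree_prod_of_monic _ _ fun i _ => monic_X_sub_C _]
    simp; lia

/-- The linear differential expression in `P`, `A = ∂P/∂t`, `B = ∂²P/∂t²` whose coefficient of
`X ^ (N - m)` is the difference of the two sides of the equation for `c_m`. -/
noncomputable def goldfishPoly (N : ℕ) (a b γ c₁ c₁' : ℂ) (P A B : ℂ[X]) : ℂ[X] :=
  B - C (2 * a) * derivative A + (C (2 * b) * (coEuler N A - A) - C γ * A)
    + (C 2 * coEuler N (X * A) + X * A)
    + C (a ^ 2) * derivative (derivative P)
    + C a * (C (3 * b + γ) * derivative P - C (2 * b) * coEuler N (derivative P))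
    + (C (2 * a + b ^ 2) * coEuler N (coEuler N P)
      - C ((2 * N + 1) * a + 2 * b ^ 2 + b * γ) * coEuler N P)
    + (C (2 * b) * (coEuler N (coEuler N (X * P)) - X * P)
      - C γ * (coEuler N (X * P) + X * P))
    + (coEuler N (coEuler N (X * (X * P))) + C 2 * coEuler N (X * (X * P)))
    - (C (2 * c₁) * A - C (2 * a * c₁) * derivative P
      + (C (c₁' - c₁ ^ 2 - γ * c₁) * P + C (2 * b * c₁) * (coEuler N P - P))
      + C c₁ * (C 2 * coEuler N (X * P) + X * P))

/-- For solutions of model (i), the coefficients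
`c_m(t) = (−1)^m·e_m(z₁(t),…,z_N(t))` (with `c₀ = 1`, `c_m = 0` for `m < 0` or `m > N`)
satisfy the second-order system (Eqcm1) with the stated coefficients
`p_m^{(j)}`, `q_m^{(j)}`. -/
theorem goldfish_stmt16 (N : ℕ) (hN : 0 < N) (a b γ α β : ℂ)
    (hα : α = a * (γ + b)) (hβ : β = -a + b * (γ + b))
    (z zd zdd : Fin N → ℝ → ℂ)
    (hz : ∀ n, ∀ t : ℝ, HasDerivAt (z n) (zd n t) t)
    (hzd : ∀ n, ∀ t : ℝ, HasDerivAt (zd n) (zdd n t) t)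
    (hsep : ∀ t : ℝ, ∀ n m : Fin N, n ≠ m → z n t ≠ z m t)
    (hNewton : ∀ n, ∀ t : ℝ, zdd n t =
      -3 * zd n t * z n t + γ * zd n t - (z n t) ^ 3 + γ * (z n t) ^ 2
        + β * z n t + α
        + ∑ ℓ ∈ Finset.univ.erase n,
            2 * (zd n t + a + b * z n t + (z n t) ^ 2)
              * (zd ℓ t + a + b * z ℓ t + (z ℓ t) ^ 2) / (z n t - z ℓ t))
    (C Cd Cdd : ℤ → ℝ → ℂ)
    (hC : ∀ (m : ℤ) (t : ℝ), C m t =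
      if 0 ≤ m ∧ m ≤ (N : ℤ) then
        (-1 : ℂ) ^ m.toNat *
          ∑ s ∈ Finset.univ.powersetCard m.toNat, ∏ n ∈ s, z n t
      else 0)
    (hCd : ∀ (m : ℤ) (t : ℝ), HasDerivAt (C m) (Cd m t) t)
    (hCdd : ∀ (m : ℤ) (t : ℝ), HasDerivAt (Cd m) (Cdd m t) t) :
    ∀ m : ℤ, 1 ≤ m → m ≤ (N : ℤ) → ∀ t : ℝ,
      Cdd m t
        + (-2 * ((N : ℂ) - (m : ℂ) + 1) * a) * Cd (m - 1) t
        + (2 * ((m : ℂ) - 1) * b - γ) * Cd m t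
        + (2 * (m : ℂ) + 1) * Cd (m + 1) t
        + (((N : ℂ) - (m : ℂ) + 2) * ((N : ℂ) - (m : ℂ) + 1) * a ^ 2) * C (m - 2) t
        + (((N : ℂ) - (m : ℂ) + 1) * (-(2 * (m : ℂ) - 3) * b + γ) * a) * C (m - 1) t
        + (-(m : ℂ) * (2 * (N : ℂ) - 2 * (m : ℂ) + 1) * a
            + (m : ℂ) * ((m : ℂ) - 2) * b ^ 2 - (m : ℂ) * b * γ) * C m t
        + (2 * ((m : ℂ) ^ 2 - 1) * b - ((m : ℂ) + 1) * γ) * C (m + 1) t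
        + ((m : ℂ) * ((m : ℂ) + 2)) * C (m + 2) t
      = 2 * C 1 t * Cd m t
        - 2 * ((N : ℂ) - (m : ℂ) + 1) * a * C 1 t * C (m - 1) t
        + (Cd 1 t - (C 1 t) ^ 2 + 2 * ((m : ℂ) - 1) * b * C 1 t - γ * C 1 t) * C m t
        + (2 * (m : ℂ) + 1) * C 1 t * C (m + 1) t := by
  have hc1 : ∀ t, C 1 t = -∑ i, z i t := by
    intro t
    rw [hC, if_pos (by lia)]
    simp [Finset.powersetCard_one]
  -- `P = ∏ (X - z i)` and its time derivatives `A`, `B` have coefficients `C`, `Cd`, `Cdd`.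
  obtain ⟨A, B, hA, hB, -⟩ := exists_deriv_prod z zd zdd hz hzd Finset.univ
  have cP : ∀ t k, intCoeff (∏ i, (X - Polynomial.C (z i t))) k = C ((N : ℤ) - k) t := by
    intro t k; rw [intCoeff_prod, hC]
  have hneg : ∀ k : ℤ, k < 0 → ∀ t, C ((N : ℤ) - k) t = 0 := by
    intro k hk t; rw [hC, if_neg (by lia)]
  have hdneg : ∀ k : ℤ, k < 0 → ∀ t, Cd ((N : ℤ) - k) t = 0 := by
    intro k hk t
    have h := hCd ((N : ℤ) - k) t
    rw [funext (hneg k hk)] at h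
    exact h.unique (hasDerivAt_const _ _)
  have hddneg : ∀ k : ℤ, k < 0 → ∀ t, Cdd ((N : ℤ) - k) t = 0 := by
    intro k hk t
    have h := hCdd ((N : ℤ) - k) t
    rw [funext (hdneg k hk)] at h
    exact h.unique (hasDerivAt_const _ _)
  have cA : ∀ t k, intCoeff (A t) k = Cd ((N : ℤ) - k) t := by
    intro t k
    rcases lt_or_ge k 0 with hk | hk
    · rw [intCoeff_of_neg _ hk, hdneg k hk]
    obtain ⟨j, rfl⟩ := Int.eq_ofNat_of_zero_le hk
    rw [intCoeff_natCast]
    refine (hA j t).unique ?_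
    simp only [← intCoeff_natCast, cP]
    exact hCd _ t
  have cB : ∀ t k, intCoeff (B t) k = Cdd ((N : ℤ) - k) t := by
    intro t k
    rcases lt_or_ge k 0 with hk | hk
    · rw [intCoeff_of_neg _ hk, hddneg k hk]
    obtain ⟨j, rfl⟩ := Int.eq_ofNat_of_zero_le hk
    rw [intCoeff_natCast]
    refine (hB j t).unique ?_
    simp only [← intCoeff_natCast, cA]
    exact hCdd _ t
  intro m hm1 hmN t
  set P : ℂ[X] := ∏ i, (X - Polynomial.C (z i t)) with hP
  set E : ℂ[X] := goldfishPoly N a b γ (C 1 t) (Cd 1 t) P (A t) (B t) with hE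
  -- The claimed equation for `m` says that the coefficient of `X ^ (N - m)` in `E` vanishes.
  have cE : ∀ j : ℤ, intCoeff E ((N : ℤ) - j) =
      (Cdd j t
        + (-2 * ((N : ℂ) - (j : ℂ) + 1) * a) * Cd (j - 1) t
        + (2 * ((j : ℂ) - 1) * b - γ) * Cd j t
        + (2 * (j : ℂ) + 1) * Cd (j + 1) t
        + (((N : ℂ) - (j : ℂ) + 2) * ((N : ℂ) - (j : ℂ) + 1) * a ^ 2) * C (j - 2) t
        + (((N : ℂ) - (j : ℂ) + 1) * (-(2 * (j : ℂ) - 3) * b + γ) * a) * C (j - 1) t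
        + (-(j : ℂ) * (2 * (N : ℂ) - 2 * (j : ℂ) + 1) * a
            + (j : ℂ) * ((j : ℂ) - 2) * b ^ 2 - (j : ℂ) * b * γ) * C j t
        + (2 * ((j : ℂ) ^ 2 - 1) * b - ((j : ℂ) + 1) * γ) * C (j + 1) t
        + ((j : ℂ) * ((j : ℂ) + 2)) * C (j + 2) t)
      - (2 * C 1 t * Cd j t
        - 2 * ((N : ℂ) - (j : ℂ) + 1) * a * C 1 t * C (j - 1) t
        + (Cd 1 t - (C 1 t) ^ 2 + 2 * ((j : ℂ) - 1) * b * C 1 t - γ * C 1 t) * C j t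
        + (2 * (j : ℂ) + 1) * C 1 t * C (j + 1) t) := fun j => by
    simp only [hE, goldfishPoly, intCoeff_add, intCoeff_sub, intCoeff_C_mul, intCoeff_X_mul,
      intCoeff_derivative, intCoeff_coEuler, cA, cB]
    simp only [hP, cP]
    have i1 : (N : ℤ) - (N - j + 1) = j - 1 := by ring
    have i2 : (N : ℤ) - (N - j + 1 + 1) = j - 2 := by ring
    have i3 : (N : ℤ) - (N - j - 1) = j + 1 := by ring
    have i4 : (N : ℤ) - (N - j - 1 - 1) = j + 2 := by ring
    have i5 : (N : ℤ) - (N - j) = j := by ring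
    simp only [i1, i2, i3, i4, i5]
    push_cast
    ring
  have hlow : ∀ j : ℤ, j < 0 → ∀ t, C j t = 0 := by
    intro j hj t; rw [hC, if_neg (by lia)]
  have hdlow : ∀ j : ℤ, j < 0 → ∀ t, Cd j t = 0 := by
    intro j hj t
    have h := hCd j t
    rw [funext (hlow j hj)] at h
    exact h.unique (hasDerivAt_const _ _)
  have hddlow : ∀ j : ℤ, j < 0 → ∀ t, Cdd j t = 0 := by
    intro j hj t
    have h := hCdd j t
    rw [funext (hdlow j hj)] at h
    exact h.unique (hasDerivAt_const _ _)
  have h0 : ∀ t, C 0 t = 1 := by intro t; rw [hC, if_pos (by lia)]; simp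
  have hd0 : ∀ t, Cd 0 t = 0 := by
    intro t
    have h := hCd 0 t
    rw [funext h0] at h
    exact h.unique (hasDerivAt_const _ _)
  have hdd0 : Cdd 0 t = 0 := by
    have h := hCdd 0 t
    rw [funext hd0] at h
    exact h.unique (hasDerivAt_const _ _)
  -- Only `k ≤ N + 2` involves some `C j` with `j ≥ 0`; there `C 0 = 1` gives the cancellation.
  have hdeg : ∀ k : ℕ, N ≤ k → E.coeff k = 0 := by
    intro k hk
    rw [← intCoeff_natCast, show (k : ℤ) = N - (N - k) by ring, cE]
    obtain ⟨i, hi⟩ : ∃ i : ℤ, i = N - k := ⟨_, rfl⟩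
    rw [← hi]
    have hi0 : i ≤ 0 := by lia
    obtain rfl | rfl | rfl | hi2 : i = 0 ∨ i = -1 ∨ i = -2 ∨ i + 2 < 0 := by lia
    · norm_num [hlow, hdlow, hddlow, h0, hd0, hdd0]
      ring
    · norm_num [hlow, hdlow, hddlow, h0, hd0, hdd0]
    · norm_num [hlow, hdlow, hddlow, h0, hd0, hdd0]
    · rw [hddlow i (by lia), hdlow (i - 1) (by lia), hdlow i (by lia), hdlow (i + 1) (by lia),
        hlow (i - 2) (by lia), hlow (i - 1) (by lia), hlow i (by lia), hlow (i + 1) (by lia),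
        hlow (i + 2) hi2]
      ring
  have hroot : ∀ n, E.eval (z n t) = 0 := by
    intro n
    obtain ⟨Qd, Qdd, hQ, hQd, hlog⟩ := exists_deriv_prod z zd zdd hz hzd (Finset.univ.erase n)
    have hX := HasCoeffDeriv.X_sub_C (hz n)
    have hD := HasCoeffDeriv.C (fun t => (hzd n t).fun_neg)
    have hfac : ∀ t, ∏ i, (X - Polynomial.C (z i t)) =
        (X - Polynomial.C (z n t)) * ∏ i ∈ Finset.univ.erase n, (X - Polynomial.C (z i t)) :=
      fun t => (Finset.mul_prod_erase _ _ (Finset.mem_univ n)).symm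
    rw [funext hfac] at hA
    have eA := hA.unique (hX.mul hQ)
    rw [funext eA] at hB
    have eB := hB.unique ((hD.mul hQ).add (hX.mul hQd)) t
    have hne : ∀ i ∈ Finset.univ.erase n, z n t - z i t ≠ 0 := fun i hi =>
      sub_ne_zero.2 (hsep t n i (Finset.ne_of_mem_erase hi).symm)
    obtain ⟨e1, e2⟩ := hlog t (z n t) hne
    rw [hE, hP, hfac t, eA t, eB]
    generalize (∏ i ∈ Finset.univ.erase n, (X - Polynomial.C (z i t))) = Q at e1 e2 ⊢
    have hN1 : ∑ ℓ ∈ Finset.univ.erase n, (1 : ℂ) = N - 1 := by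
      rw [Finset.sum_erase_eq_sub (Finset.mem_univ n)]; simp
    have hS1 : ∑ ℓ ∈ Finset.univ.erase n, z ℓ t = -C 1 t - z n t := by
      rw [Finset.sum_erase_eq_sub (Finset.mem_univ n), hc1]; simp
    have hforce := hNewton n t
    have hsum : ∑ ℓ ∈ Finset.univ.erase n,
            2 * (zd n t + a + b * z n t + (z n t) ^ 2)
              * (zd ℓ t + a + b * z ℓ t + (z ℓ t) ^ 2) / (z n t - z ℓ t) =
        2 * (zd n t + a + b * z n t + (z n t) ^ 2) *
          (∑ ℓ ∈ Finset.univ.erase n, zd ℓ t / (z n t - z ℓ t)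
            + (a + b * z n t + z n t ^ 2) * ∑ ℓ ∈ Finset.univ.erase n, 1 / (z n t - z ℓ t)
            - (b + z n t) * (N - 1) - (-C 1 t - z n t)) := by
      rw [← hN1, ← hS1, Finset.mul_sum, Finset.mul_sum, ← Finset.sum_add_distrib,
        ← Finset.sum_sub_distrib, ← Finset.sum_sub_distrib, Finset.mul_sum]
      refine Finset.sum_congr rfl fun ℓ hℓ => ?_
      have := hne ℓ hℓ
      field_simp
      ring
    rw [hsum] at hforce
    generalize ∑ ℓ ∈ Finset.univ.erase n, zd ℓ t / (z n t - z ℓ t) = T at *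
    generalize ∑ ℓ ∈ Finset.univ.erase n, 1 / (z n t - z ℓ t) = S at *
    simp only [goldfishPoly, coEuler, derivative_mul, derivative_add, derivative_sub, eval_add,
      eval_sub, eval_mul, derivative_X, derivative_C, eval_X, eval_C, eval_one, eval_zero,
      derivative_one, derivative_zero, e1, e2, hforce, hα, hβ]
    ring
  have hE0 : E = 0 := by
    refine eq_zero_of_natDegree_lt_card_of_eval_eq_zero E (f := fun n => z n t)
      (fun n n' h => by_contra fun hn => hsep t n n' hn h) hroot ?_
    rw [Fintype.card_fin]
    by_contra! hd
    have hE0 : E = 0 := leadingCoeff_eq_zero.1 (hdeg _ hd)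
    rw [hE0, natDegree_zero] at hd
    lia
  have h := cE m
  rw [hE0, show intCoeff 0 ((N : ℤ) - m) = 0 by simp [intCoeff]] at h
  exact sub_eq_zero.1 h.symm
end

section
/- Let c be a complex number, ω a nonzero real number, and τ(t) = (exp(iωt) − 1)/(iω). Let Ω ⊆ ℂ be an open set containing {τ(t) : t ∈ ℝ} and let γ₀, γ₁,…,γ_N : Ω → ℂ be twice complex-differentiable with γ₀ ≡ 1 and the convention γ_m ≡ 0 for m > N, satisfying on Ω, for m = 1,…,N, the base coefficient system γ_m'' = 2c·γ₁·γ_m' − [2c(m−1)+3]·γ_{m+1}' + [(3−2c)·γ₁' − γ₁² + 2(1−c²)·γ₂]·γ_m + (2c²m+1)·γ₁·γ_{m+1} − (m+2)·[c²(m−1)+1]·γ_{m+2}, where primes denote complex derivatives. Define c̃_m(t) = exp(imωt)·γ_m(τ(t)) for real t. Then each c̃_m is twice differentiable in t and satisfies, for m = 1,…,N and all t, the isochronous system: c̃_m'' = [(2m+1)·iω + 2c·c̃₁]·c̃_m' − [2c(m−1)+3]·c̃_{m+1}' + {m(m+1)·ω² − [2c(m−1)+3]·iω·c̃₁ + (3−2c)·c̃₁'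 − c̃₁² + 2(1−c²)·c̃₂}·c̃_m + {(m+1)·[2c(m−1)+3]·iω + (2c²m+1)·c̃₁}·c̃_{m+1} − (m+2)·[c²(m−1)+1]·c̃_{m+2}, where now primes denote derivatives with respect to the real time t and c̃_m ≡ 0 for m > N. -/
/-!
Write `E = exp (iωt)`. Then `τ' = E` and `c̃_m = E ^ m * γ_m(τ)`, so each derivative in `t` gains
one power of `E`: `c̃_m' = i m ω c̃_m + E ^ (m + 1) * γ_m'(τ)`, and a second differentiation gives
`c̃_m'' = (2m + 1) i ω c̃_m' + m (m + 1) ω² c̃_m + E ^ (m + 2) * γ_m''(τ)`.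
Every term of the base system for `γ_m''` has weight `m + 2` (where `γ_k` has weight `k` and a
derivative adds one), so multiplying that system by `E ^ (m + 2)` and substituting
`E ^ (k + 1) * γ_k'(τ) = c̃_k' - i k ω c̃_k` yields the isochronous system.
-/

/-- Differentiation along the curve `τ` with `τ' = E`, for a function carrying the weight `E ^ k`;
it is used for both `γ_m` (with `k = m`) and `γ_m'` (with `k = m + 1`). -/
lemma hasDerivAt_weight_mul_comp {E τ : ℝ → ℂ} {a : ℂ} {t : ℝ}
    (hE : HasDerivAt E (a * E t) t) (hτ : HasDerivAt τ (E t) t) {f : ℂ → ℂ} {f' : ℂ}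
    (hf : HasDerivAt f f' (τ t)) (k : ℕ) :
    HasDerivAt (fun s => E s ^ k * f (τ s))
      (a * k * (E t ^ k * f (τ t)) + E t ^ (k + 1) * f') t := by
  have h := (hE.fun_pow k).mul (hf.comp t hτ)
  refine h.congr_deriv ?_
  rcases k with _ | k
  · simp [mul_comm]
  · simp only [Nat.add_sub_cancel, Function.comp]
    ring

/-- "the trick" for the coefficients: If `γ₀ ≡ 1, γ₁,…,γ_N` are twice
complex-differentiable on an open set `Ω` containing the curve `τ(t) = (e^{iωt} − 1)/(iω)`
and satisfy the base coefficient system on `Ω`, then `c̃_m(t) = e^{imωt}·γ_m(τ(t))` is twice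
differentiable in `t` and satisfies the isochronous coefficient system. -/
theorem goldfish_stmt18 (N : ℕ) (hN : 0 < N) (c : ℂ) (ω : ℝ) (hω : ω ≠ 0)
    (τ : ℝ → ℂ)
    (hτ : ∀ t : ℝ, τ t = (Complex.exp (Complex.I * (ω : ℂ) * (t : ℂ)) - 1)
      / (Complex.I * (ω : ℂ)))
    (Ω : Set ℂ) (hΩopen : IsOpen Ω) (hΩτ : ∀ t : ℝ, τ t ∈ Ω)
    (g gd gdd : ℕ → ℂ → ℂ)
    (hg0 : ∀ w : ℂ, g 0 w = 1)
    (hgtop : ∀ m : ℕ, N < m → ∀ w : ℂ, g m w = 0)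
    (hg : ∀ m : ℕ, ∀ w ∈ Ω, HasDerivAt (g m) (gd m w) w)
    (hgd : ∀ m : ℕ, ∀ w ∈ Ω, HasDerivAt (gd m) (gdd m w) w)
    (hbase : ∀ m : ℕ, 1 ≤ m → m ≤ N → ∀ w ∈ Ω, gdd m w =
      2 * c * g 1 w * gd m w
        - (2 * c * ((m : ℂ) - 1) + 3) * gd (m + 1) w
        + ((3 - 2 * c) * gd 1 w - (g 1 w) ^ 2 + 2 * (1 - c ^ 2) * g 2 w) * g m w
        + (2 * c ^ 2 * (m : ℂ) + 1) * g 1 w * g (m + 1) w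
        - ((m : ℂ) + 2) * (c ^ 2 * ((m : ℂ) - 1) + 1) * g (m + 2) w)
    (ct : ℕ → ℝ → ℂ)
    (hct : ∀ m : ℕ, ∀ t : ℝ, ct m t =
      Complex.exp (Complex.I * (m : ℂ) * (ω : ℂ) * (t : ℂ)) * g m (τ t)) :
    ∃ cd : ℕ → ℝ → ℂ,
      (∀ m : ℕ, ∀ t : ℝ, HasDerivAt (ct m) (cd m t) t) ∧
      (∀ m : ℕ, 1 ≤ m → m ≤ N → ∀ t : ℝ, HasDerivAt (cd m)
        (((2 * (m : ℂ) + 1) * Complex.I * (ω : ℂ) + 2 * c * ct 1 t) * cd m t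
          - (2 * c * ((m : ℂ) - 1) + 3) * cd (m + 1) t
          + ((m : ℂ) * ((m : ℂ) + 1) * (ω : ℂ) ^ 2
              - (2 * c * ((m : ℂ) - 1) + 3) * Complex.I * (ω : ℂ) * ct 1 t
              + (3 - 2 * c) * cd 1 t - (ct 1 t) ^ 2 + 2 * (1 - c ^ 2) * ct 2 t) * ct m t
          + (((m : ℂ) + 1) * (2 * c * ((m : ℂ) - 1) + 3) * Complex.I * (ω : ℂ)
              + (2 * c ^ 2 * (m : ℂ) + 1) * ct 1 t) * ct (m + 1) t
          - ((m : ℂ) + 2) * (c ^ 2 * ((m : ℂ) - 1) + 1) * ct (m + 2) t) t) := by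
  have hIω : Complex.I * (ω : ℂ) ≠ 0 :=
    mul_ne_zero Complex.I_ne_zero (Complex.ofReal_ne_zero.mpr hω)
  obtain ⟨E, hEdef⟩ : ∃ E : ℝ → ℂ,
      ∀ t : ℝ, E t = Complex.exp (Complex.I * (ω : ℂ) * (t : ℂ)) := ⟨_, fun _ => rfl⟩
  have hE : ∀ t, HasDerivAt E (Complex.I * (ω : ℂ) * E t) t := by
    intro t
    rw [show E = fun t : ℝ => Complex.exp (Complex.I * (ω : ℂ) * (t : ℂ)) from funext hEdef]
    have h : HasDerivAt (fun s : ℝ => Complex.I * (ω : ℂ) * (s : ℂ)) (Complex.I * (ω : ℂ)) t := by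
      simpa using (Complex.ofRealCLM.hasDerivAt (x := t)).const_mul (Complex.I * (ω : ℂ))
    exact h.cexp.congr_deriv (mul_comm _ _)
  have hτ' : ∀ t, HasDerivAt τ (E t) t := by
    intro t
    rw [show τ = fun t : ℝ => (E t - 1) / (Complex.I * (ω : ℂ)) from
      funext fun s => by rw [hτ, hEdef]]
    refine (((hE t).sub_const 1).div_const _).congr_deriv ?_
    rw [mul_div_cancel_left₀ _ hIω]
  have hct' : ∀ m : ℕ, ct m = fun t => E t ^ m * g m (τ t) := by
    intro m
    funext t
    rw [hct, hEdef, ← Complex.exp_nat_mul]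
    congr 2
    ring
  refine ⟨fun m t => Complex.I * (ω : ℂ) * m * (E t ^ m * g m (τ t))
    + E t ^ (m + 1) * gd m (τ t), ?_, ?_⟩
  · intro m t
    rw [hct']
    exact hasDerivAt_weight_mul_comp (hE t) (hτ' t) (hg m _ (hΩτ t)) m
  · intro m hm hmN t
    have h1 := hasDerivAt_weight_mul_comp (hE t) (hτ' t) (hg m _ (hΩτ t)) m
    have h2 := hasDerivAt_weight_mul_comp (hE t) (hτ' t) (hgd m _ (hΩτ t)) (m + 1)
    refine ((h1.const_mul (Complex.I * (ω : ℂ) * m)).add h2).congr_deriv ?_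
    rw [hbase m hm hmN _ (hΩτ t)]
    simp only [hct']
    push_cast
    -- The term `m (m + 1) ω²` arises from `-(iω)² m (m + 1)`, which needs `i² = -1`.
    linear_combination (-(m : ℂ) * (m + 1) * ω ^ 2 * E t ^ m * g m (τ t)) * Complex.I_sq
end

section
/- Let a, b, γ be complex numbers, set α = a·(γ + b) and β = −a + b·(γ + b), and let z₁,…,z_N : ℝ → ℂ be twice differentiable with pairwise distinct values for every t, satisfying the model (i) equations z_n'' = −3·z_n'·z_n + γ·z_n' − z_n³ + γ·z_n² + β·z_n + α + Σ_{ℓ≠n} 2·(z_n' + a + b·z_n + z_n²)·(z_ℓ' + a + b·z_ℓ + z_ℓ²)/(z_n − z_ℓ). Define ψ(z,t) = Π_{n=1}^N (z − z_n(t)) for z ∈ ℂ and t ∈ ℝ, and c₁(t) = −Σ_{n=1}^N z_n(t). Then ψ satisfies, for all z and t, the partial differential equation ψ_tt + (η₀ + η₁·z + η₂·z²)·ψ_zt + (θ₀ + θ₁·z)·ψ_t + (α₀ + α₁·z + α₂·z² + α₃·z³ + α₄·z⁴)·ψ_zz + (β₀ + β₁·z + β₂·z² + β₃·z³)·ψ_z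 + (γ₀ + γ₁·z + γ₂·z²)·ψ = 0, where subscripts z and t denote partial derivatives and the coefficients are η₀ = −2a, η₁ = −2b, η₂ = −2; θ₀ = −2·c₁ + 2(N−1)·b − γ, θ₁ = 2N−1; α₀ = a², α₁ = 2ab, α₂ = 2a + b², α₃ = 2b, α₄ = 1; β₀ = [2·c₁ − (2N−3)·b + γ]·a, β₁ = 2b·c₁ − (2N−3)·(a + b²) + b·γ, β₂ = 2·c₁ − 2(2N−3)·b + γ, β₃ = −(2N−3); γ₀ = −c₁' + c₁² − 2(N−1)·b·c₁ + γ·c₁ − N·a + N(N−2)·b² − N·b·γ, γ₁ = −(2N−1)·c₁ + 2N(N−2)·b − N·γ, γ₂ = N(N−2). -/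
open Finset

/-!
Write `E n = ∏_{k ≠ n} (w - z k)` and `D n m = ∏_{k ≠ n, m} (w - z k)` for `n ≠ m` (with
`D n n = 0`). All derivatives of `ψ` are linear combinations of the `E n` and `D n m`, and with
`Q(w) = a + b w + w²` the second-order part of the equation is
`∑ (z_n' + Q(w)) (z_m' + Q(w)) D n m - ∑ z_n'' E n`.

Put `v_n = z_n' + Q(z_n)`. Since `z_n' + Q(w) = v_n + (w - z_n) (w + z_n + b)`, and
`(w - z_m) D n m = E n`, `(w - z_n) E n = ψ`, the double sum splits into `∑ v_n v_m D n m`, a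
combination of the `E n`, and a multiple of `ψ` (`double_sum_split`). As
`D n m = (E n - E m) / (z_n - z_m)`, the first piece cancels the interaction term of the equations
of motion (`interaction_sum`). What is left multiplying each `E n` is divisible by `w - z_n`, so the
whole expression becomes a multiple of `ψ`, and the factor is zero. Multiplying through by
products, rather than dividing by `ψ`, makes the argument valid also when `w` is a root of `ψ`.
-/

/-- The product of `w - x k` over all `k ≠ n`. -/
noncomputable def prodOne {N : ℕ} (x : Fin N → ℂ) (w : ℂ) (n : Fin N) : ℂ :=
  ∏ k ∈ univ.erase n, (w - x k)

/-- The product of `w - x k` over all `k ≠ n, m`, set to zero on the diagonal `n = m` so that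
sums over pairs `n ≠ m` can be written as full double sums. -/
noncomputable def prodTwo {N : ℕ} (x : Fin N → ℂ) (w : ℂ) (n m : Fin N) : ℂ :=
  if n = m then 0 else ∏ k ∈ (univ.erase n).erase m, (w - x k)

lemma sub_mul_prodOne {N : ℕ} (x : Fin N → ℂ) (w : ℂ) (n : Fin N) :
    (w - x n) * prodOne x w n = ∏ k, (w - x k) :=
  mul_prod_erase univ (fun k => w - x k) (mem_univ n)

lemma sub_mul_prodTwo {N : ℕ} (x : Fin N → ℂ) (w : ℂ) (n m : Fin N) :
    (w - x m) * prodTwo x w n m = prodOne x w n - if n = m then prodOne x w n else 0 := by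
  unfold prodTwo prodOne
  split_ifs with h
  · simp
  · rw [sub_zero]
    exact mul_prod_erase (univ.erase n) (fun k => w - x k) (by simp [Ne.symm h])

lemma prodTwo_comm {N : ℕ} (x : Fin N → ℂ) (w : ℂ) (n m : Fin N) :
    prodTwo x w n m = prodTwo x w m n := by
  unfold prodTwo
  rw [erase_right_comm]
  simp only [eq_comm]

lemma prodTwo_eq_div {N : ℕ} (x : Fin N → ℂ) (hx : ∀ n m, n ≠ m → x n ≠ x m) (w : ℂ)
    (n m : Fin N) :
    prodTwo x w n m = (prodOne x w n - prodOne x w m) / (x n - x m) := by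
  by_cases h : n = m
  · simp [prodTwo, h]
  · have h1 := sub_mul_prodTwo x w n m
    have h2 := sub_mul_prodTwo x w m n
    rw [if_neg h, sub_zero] at h1
    rw [if_neg (Ne.symm h), sub_zero, prodTwo_comm] at h2
    rw [eq_div_iff (sub_ne_zero.2 (hx n m h)), ← h1, ← h2]
    ring

/-- The part of the double sum that is cancelled by the two-body forces. -/
lemma interaction_sum {N : ℕ} (x v : Fin N → ℂ) (hx : ∀ n m, n ≠ m → x n ≠ x m) (w : ℂ) :
    ∑ n, ∑ m, v n * v m * prodTwo x w n m
      = ∑ n, (∑ m ∈ univ.erase n, 2 * v n * v m / (x n - x m)) * prodOne x w n := by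
  have h : ∀ n, ∑ m ∈ univ.erase n, 2 * v n * v m / (x n - x m)
      = ∑ m, 2 * v n * v m / (x n - x m) := fun n => sum_erase _ (by simp)
  have h1 : ∑ n, ∑ m, v n * v m * prodTwo x w n m
      = ∑ n, ∑ m, v n * v m / (x n - x m) * prodOne x w n
        - ∑ n, ∑ m, v n * v m / (x n - x m) * prodOne x w m := by
    simp only [← sum_sub_distrib]
    refine sum_congr rfl fun n _ => sum_congr rfl fun m _ => ?_
    rw [prodTwo_eq_div x hx]
    ring
  have h2 : ∑ n, ∑ m, v n * v m / (x n - x m) * prodOne x w m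
      = -∑ n, ∑ m, v n * v m / (x n - x m) * prodOne x w n := by
    rw [sum_comm]
    simp only [← sum_neg_distrib]
    refine sum_congr rfl fun n _ => sum_congr rfl fun m _ => ?_
    rw [← neg_sub (x n) (x m), div_neg]
    ring
  rw [h1, h2, sub_neg_eq_add, ← sum_add_distrib]
  refine sum_congr rfl fun n _ => ?_
  rw [h, sum_mul, ← sum_add_distrib]
  refine sum_congr rfl fun m _ => ?_
  ring

/-- Expansion of a product of factors `v n + (w - x n) * X n`: one factor `w - x m` completes
`prodTwo` to `prodOne`, and two of them complete it to the full product. -/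
lemma double_sum_split {N : ℕ} (x v X : Fin N → ℂ) (w : ℂ) :
    ∑ n, ∑ m, (v n + (w - x n) * X n) * (v m + (w - x m) * X m) * prodTwo x w n m
      = ∑ n, ∑ m, v n * v m * prodTwo x w n m
        + 2 * ∑ n, v n * ((∑ m, X m) - X n) * prodOne x w n
        + ((∑ n, X n) ^ 2 - ∑ n, X n ^ 2) * ∏ k, (w - x k) := by
  have hinner : ∀ n, ∑ m, X m * ((w - x m) * prodTwo x w n m)
      = ((∑ m, X m) - X n) * prodOne x w n := by
    intro n
    simp only [sub_mul_prodTwo]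
    simp [mul_sub, sub_mul, sum_mul]
  have hA : ∑ n, ∑ m, v n * (X m * ((w - x m) * prodTwo x w n m))
      = ∑ n, v n * ((∑ m, X m) - X n) * prodOne x w n := by
    refine sum_congr rfl fun n _ => ?_
    rw [← mul_sum, hinner]
    ring
  have hB : ∑ n, ∑ m, v m * (X n * ((w - x n) * prodTwo x w n m))
      = ∑ n, v n * ((∑ m, X m) - X n) * prodOne x w n := by
    rw [sum_comm, ← hA]
    refine sum_congr rfl fun n _ => sum_congr rfl fun m _ => ?_
    rw [prodTwo_comm]
  have hC : ∑ n, ∑ m, ((w - x n) * X n) * (X m * ((w - x m) * prodTwo x w n m))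
      = ((∑ n, X n) ^ 2 - ∑ n, X n ^ 2) * ∏ k, (w - x k) := by
    rw [pow_two, sum_mul, ← sum_sub_distrib, sum_mul]
    refine sum_congr rfl fun n _ => ?_
    rw [← mul_sum, hinner, ← sub_mul_prodOne x w n]
    ring
  rw [two_mul, ← hC, ← add_assoc]
  nth_rewrite 1 [← hA]
  rw [← hB]
  simp only [← sum_add_distrib]
  refine sum_congr rfl fun n _ => sum_congr rfl fun m _ => ?_
  ring

/-- The algebraic content of the equation at a fixed time: `x`, `y`, `f` stand for the positions,
velocities and accelerations, and the sums over `prodOne` and `prodTwo` for the derivatives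
of the polynomial. -/
lemma algebraic_identity {N : ℕ} (a b γ : ℂ) (x y f : Fin N → ℂ)
    (hx : ∀ n m, n ≠ m → x n ≠ x m)
    (hf : ∀ n, f n = -3 * y n * x n + γ * y n - x n ^ 3 + γ * x n ^ 2
        + (-a + b * (γ + b)) * x n + a * (γ + b)
        + ∑ m ∈ univ.erase n, 2 * (y n + a + b * x n + x n ^ 2)
            * (y m + a + b * x m + x m ^ 2) / (x n - x m))
    (w S Sd P : ℂ) (hS : S = ∑ n, x n) (hSd : Sd = ∑ n, y n) (hP : P = ∏ n, (w - x n)) :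
    (-∑ n, f n * prodOne x w n + ∑ n, ∑ m, y n * y m * prodTwo x w n m)
      - 2 * (a + b * w + w ^ 2) * (-∑ n, ∑ m, y n * prodTwo x w n m)
      + (2 * S + 2 * ((N : ℂ) - 1) * b - γ + (2 * (N : ℂ) - 1) * w)
          * (-∑ n, y n * prodOne x w n)
      + (a + b * w + w ^ 2) ^ 2 * (∑ n, ∑ m, prodTwo x w n m)
      + (a + b * w + w ^ 2) * (γ - 2 * S - (2 * (N : ℂ) - 3) * (w + b)) * (∑ n, prodOne x w n)
      + (Sd + S ^ 2 + 2 * ((N : ℂ) - 1) * b * S - γ * S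
          - (N : ℂ) * a + (N : ℂ) * ((N : ℂ) - 2) * b ^ 2 - (N : ℂ) * b * γ
          + ((2 * (N : ℂ) - 1) * S + 2 * (N : ℂ) * ((N : ℂ) - 2) * b - (N : ℂ) * γ) * w
          + (N : ℂ) * ((N : ℂ) - 2) * w ^ 2) * P = 0 := by
  have hswap : ∑ n, ∑ m, y m * prodTwo x w n m = ∑ n, ∑ m, y n * prodTwo x w n m := by
    rw [sum_comm]
    refine sum_congr rfl fun n _ => sum_congr rfl fun m _ => ?_
    rw [prodTwo_comm]
  -- Completing the square in the second-order part.
  have hsq : ∑ n, ∑ m, y n * y m * prodTwo x w n m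
      - 2 * (a + b * w + w ^ 2) * (-∑ n, ∑ m, y n * prodTwo x w n m)
      + (a + b * w + w ^ 2) ^ 2 * (∑ n, ∑ m, prodTwo x w n m)
      = ∑ n, ∑ m, ((y n + a + b * x n + x n ^ 2) + (w - x n) * (w + x n + b))
          * ((y m + a + b * x m + x m ^ 2) + (w - x m) * (w + x m + b)) * prodTwo x w n m := by
    have h : ∀ n m, ((y n + a + b * x n + x n ^ 2) + (w - x n) * (w + x n + b))
          * ((y m + a + b * x m + x m ^ 2) + (w - x m) * (w + x m + b)) * prodTwo x w n m
        = y n * y m * prodTwo x w n m + (a + b * w + w ^ 2) * (y n * prodTwo x w n m)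
          + (a + b * w + w ^ 2) * (y m * prodTwo x w n m)
          + (a + b * w + w ^ 2) ^ 2 * prodTwo x w n m := fun n m => by ring
    simp only [h, sum_add_distrib, ← mul_sum, hswap]
    ring
  rw [double_sum_split x (fun n => y n + a + b * x n + x n ^ 2) (fun n => w + x n + b) w,
    interaction_sum x (fun n => y n + a + b * x n + x n ^ 2) hx w] at hsq
  have hX : ∑ n, (w + x n + b) = (N : ℂ) * (w + b) + S := by
    simp [sum_add_distrib, hS]
    ring
  have hX2 : ∑ n, (w + x n + b) ^ 2
      = (N : ℂ) * (w + b) ^ 2 + 2 * (w + b) * S + ∑ n, x n ^ 2 := by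
    have h : ∀ n, (w + x n + b) ^ 2 = (w + b) ^ 2 + 2 * (w + b) * x n + x n ^ 2 :=
      fun n => by ring
    simp [h, sum_add_distrib, hS, mul_sum]
  rw [hX, hX2, ← hP] at hsq
  -- The coefficient of each `prodOne` is a multiple of `w - x n`.
  have hfirst : -∑ n, f n * prodOne x w n
      + ∑ n, (∑ m ∈ univ.erase n, 2 * (y n + a + b * x n + x n ^ 2)
            * (y m + a + b * x m + x m ^ 2) / (x n - x m)) * prodOne x w n
      + 2 * ∑ n, (y n + a + b * x n + x n ^ 2) * ((N : ℂ) * (w + b) + S - (w + x n + b))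
          * prodOne x w n
      + (2 * S + 2 * ((N : ℂ) - 1) * b - γ + (2 * (N : ℂ) - 1) * w)
          * (-∑ n, y n * prodOne x w n)
      + (a + b * w + w ^ 2) * (γ - 2 * S - (2 * (N : ℂ) - 3) * (w + b)) * (∑ n, prodOne x w n)
      = ∑ n, (-y n + (w + x n + b) * (γ - 2 * S - (2 * (N : ℂ) - 3) * (w + b))
          + (a + b * x n + x n ^ 2)) * P := by
    simp only [← sum_neg_distrib, mul_sum, ← sum_add_distrib]
    refine sum_congr rfl fun n _ => ?_
    rw [hf n, hP, ← sub_mul_prodOne x w n]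
    ring
  have hlast : ∑ n, (-y n + (w + x n + b) * (γ - 2 * S - (2 * (N : ℂ) - 3) * (w + b))
          + (a + b * x n + x n ^ 2))
      = -Sd + ((N : ℂ) * (w + b) + S) * (γ - 2 * S - (2 * (N : ℂ) - 3) * (w + b))
        + (N : ℂ) * a + b * S + ∑ n, x n ^ 2 := by
    rw [sum_add_distrib, sum_add_distrib, ← sum_mul, hX, sum_add_distrib, sum_add_distrib,
      sum_neg_distrib, ← mul_sum, ← hS, ← hSd]
    simp
    ring
  rw [← sum_mul, hlast] at hfirst
  linear_combination hsq + hfirst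

/-- The product rule, over a field `𝕜` covering both the real time and the complex space variable. -/
lemma hasDerivAt_prod_erase {𝕜 : Type*} [NontriviallyNormedField 𝕜] [NormedAlgebra 𝕜 ℂ]
    {ι : Type*} [DecidableEq ι] (s : Finset ι) (g : ι → 𝕜 → ℂ) (g' : ι → ℂ) (t : 𝕜)
    (hg : ∀ k, HasDerivAt (g k) (g' k) t) :
    HasDerivAt (fun t => ∏ k ∈ s, g k t) (∑ k ∈ s, g' k * ∏ j ∈ s.erase k, g j t) t := by
  refine (HasDerivAt.fun_finsetProd fun k _ => hg k).congr_deriv ?_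
  refine sum_congr rfl fun k _ => ?_
  rw [smul_eq_mul, mul_comm]

/-- Differentiating `prodOne` gives the off-diagonal sum of the `prodTwo`. -/
lemma hasDerivAt_prodOne {𝕜 : Type*} [NontriviallyNormedField 𝕜] [NormedAlgebra 𝕜 ℂ] {N : ℕ}
    (x : Fin N → 𝕜 → ℂ) (w : 𝕜 → ℂ) (d : Fin N → ℂ) (t : 𝕜)
    (hd : ∀ k, HasDerivAt (fun t => w t - x k t) (d k) t) (n : Fin N) :
    HasDerivAt (fun t => prodOne (fun k => x k t) (w t) n)
      (∑ m, d m * prodTwo (fun k => x k t) (w t) n m) t := by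
  refine (hasDerivAt_prod_erase (univ.erase n) (fun k t => w t - x k t) d t hd).congr_deriv ?_
  rw [← sum_erase univ (a := n) (by simp [prodTwo])]
  refine sum_congr rfl fun m hm => ?_
  rw [prodTwo, if_neg (ne_of_mem_erase hm).symm]

/-- For solutions of model (i), the monic polynomial
`ψ(z,t) = Π_{n=1}^N (z − z_n(t))` satisfies the (functional) partial differential equation
(Eqpsi) with the stated coefficients, where `c₁(t) = −Σ_n z_n(t)`. -/
theorem goldfish_stmt19 (N : ℕ) (hN : 0 < N) (a b γ α β : ℂ)
    (hα : α = a * (γ + b)) (hβ : β = -a + b * (γ + b))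
    (z zd zdd : Fin N → ℝ → ℂ)
    (hz : ∀ n, ∀ t : ℝ, HasDerivAt (z n) (zd n t) t)
    (hzd : ∀ n, ∀ t : ℝ, HasDerivAt (zd n) (zdd n t) t)
    (hsep : ∀ t : ℝ, ∀ n m : Fin N, n ≠ m → z n t ≠ z m t)
    (hNewton : ∀ n, ∀ t : ℝ, zdd n t =
      -3 * zd n t * z n t + γ * zd n t - (z n t) ^ 3 + γ * (z n t) ^ 2
        + β * z n t + α
        + ∑ ℓ ∈ Finset.univ.erase n,
            2 * (zd n t + a + b * z n t + (z n t) ^ 2)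
              * (zd ℓ t + a + b * z ℓ t + (z ℓ t) ^ 2) / (z n t - z ℓ t))
    (ψ : ℂ → ℝ → ℂ)
    (hψ : ∀ (w : ℂ) (t : ℝ), ψ w t = ∏ n : Fin N, (w - z n t))
    (c₁ c₁d : ℝ → ℂ)
    (hc₁ : ∀ t : ℝ, c₁ t = -∑ n : Fin N, z n t)
    (hc₁d : ∀ t : ℝ, c₁d t = -∑ n : Fin N, zd n t) :
    ∀ (w : ℂ) (t : ℝ),
      deriv (deriv (ψ w)) t
        + (-2 * a + (-2 * b) * w + (-2) * w ^ 2)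
            * deriv (fun w' => deriv (ψ w') t) w
        + ((-2 * c₁ t + 2 * ((N : ℂ) - 1) * b - γ) + (2 * (N : ℂ) - 1) * w)
            * deriv (ψ w) t
        + (a ^ 2 + (2 * a * b) * w + (2 * a + b ^ 2) * w ^ 2 + (2 * b) * w ^ 3 + w ^ 4)
            * deriv (fun w' => deriv (fun w'' => ψ w'' t) w') w
        + ((2 * c₁ t - (2 * (N : ℂ) - 3) * b + γ) * a
            + (2 * b * c₁ t - (2 * (N : ℂ) - 3) * (a + b ^ 2) + b * γ) * w
            + (2 * c₁ t - 2 * (2 * (N : ℂ) - 3) * b + γ) * w ^ 2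
            + (-(2 * (N : ℂ) - 3)) * w ^ 3)
            * deriv (fun w' => ψ w' t) w
        + ((-c₁d t + (c₁ t) ^ 2 - 2 * ((N : ℂ) - 1) * b * c₁ t + γ * c₁ t
              - (N : ℂ) * a + (N : ℂ) * ((N : ℂ) - 2) * b ^ 2 - (N : ℂ) * b * γ)
            + (-(2 * (N : ℂ) - 1) * c₁ t + 2 * (N : ℂ) * ((N : ℂ) - 2) * b
              - (N : ℂ) * γ) * w
            + ((N : ℂ) * ((N : ℂ) - 2)) * w ^ 2)
            * ψ w t
      = 0 := by
  intro w t
  have hψt : ∀ w t, HasDerivAt (ψ w) (-∑ n, zd n t * prodOne (fun k => z k t) w n) t := by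
    intro w t
    rw [show ψ w = fun t => ∏ n, (w - z n t) from funext (hψ w)]
    refine (hasDerivAt_prod_erase univ (fun k t => w - z k t) (fun k => -zd k t) t
      fun k => (hz k t).const_sub w).congr_deriv ?_
    simp [prodOne]
  have hψz : ∀ w t, HasDerivAt (fun w => ψ w t) (∑ n, prodOne (fun k => z k t) w n) w := by
    intro w t
    simp only [hψ]
    refine (hasDerivAt_prod_erase univ (fun k w => w - z k t) (fun _ => 1) w
      fun k => (hasDerivAt_id w).sub_const (z k t)).congr_deriv ?_
    simp [prodOne]
  have hEt : ∀ n, HasDerivAt (fun t => prodOne (fun k => z k t) w n)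
      (∑ m, -zd m t * prodTwo (fun k => z k t) w n m) t := fun n =>
    hasDerivAt_prodOne z (fun _ => w) (fun k => -zd k t) t (fun k => (hz k t).const_sub w) n
  have hEz : ∀ n, HasDerivAt (fun w => prodOne (fun k => z k t) w n)
      (∑ m, prodTwo (fun k => z k t) w n m) w := fun n => by
    simpa using hasDerivAt_prodOne (fun k (_ : ℂ) => z k t) (fun w => w) (fun _ => 1) w
      (fun k => (hasDerivAt_id w).sub_const (z k t)) n
  have h1 : deriv (ψ w) = fun t => -∑ n, zd n t * prodOne (fun k => z k t) w n :=
    funext fun t => (hψt w t).deriv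
  have h2 : deriv (deriv (ψ w)) t = -∑ n, zdd n t * prodOne (fun k => z k t) w n
      + ∑ n, ∑ m, zd n t * zd m t * prodTwo (fun k => z k t) w n m := by
    rw [h1, (HasDerivAt.fun_sum fun n _ => (hzd n t).fun_mul (hEt n)).fun_neg.deriv,
      sum_add_distrib, neg_add, ← sum_neg_distrib (s := univ)
        (f := fun n => zd n t * ∑ m, -zd m t * prodTwo (fun k => z k t) w n m)]
    congr 1
    refine sum_congr rfl fun n _ => ?_
    rw [mul_sum, ← sum_neg_distrib]
    refine sum_congr rfl fun m _ => ?_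
    ring
  have h3 : deriv (fun w' => deriv (ψ w') t) w
      = -∑ n, ∑ m, zd n t * prodTwo (fun k => z k t) w n m := by
    rw [show (fun w' => deriv (ψ w') t)
      = fun w' => -∑ n, zd n t * prodOne (fun k => z k t) w' n from
        funext fun w' => (hψt w' t).deriv,
      (HasDerivAt.fun_sum fun n _ => (hEz n).const_mul (zd n t)).fun_neg.deriv]
    simp only [mul_sum]
  have h4 : deriv (fun w' => deriv (fun w'' => ψ w'' t) w') w
      = ∑ n, ∑ m, prodTwo (fun k => z k t) w n m := by
    rw [show (fun w' => deriv (fun w'' => ψ w'' t) w')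
      = fun w' => ∑ n, prodOne (fun k => z k t) w' n from
        funext fun w' => (hψz w' t).deriv,
      (HasDerivAt.fun_sum fun n _ => hEz n).deriv]
  rw [h2, h3, h4, (hψt w t).deriv, (hψz w t).deriv, hc₁, hc₁d]
  have key := algebraic_identity a b γ (fun n => z n t) (fun n => zd n t) (fun n => zdd n t)
    (hsep t) (fun n => by rw [hNewton n t, hα, hβ]) w _ _ _ rfl rfl (hψ w t)
  linear_combination key
end
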